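/- arXiv:1404.2873 — 2 statements merged into one kernel-verified Lean document; each statement's English description precedes it below -/
import Mathlib

section
/- Let G be a finite abelian group with exp(G) = n and r(G) = r, and let G₀ ⊆ G be a minimal non-half-factorial LCN-set with min Δ(G₀) = max Δ*(G). Then |G₀| = r + 1, r ≥ n − 1, and for every h ∈ G₀ and every h' ∈ G₀ \ {h}, one has h ∉ ⟨G₀ \ {h, h'}⟩. -/
open Multiset

section Defs

variable {G : Type*} [AddCommGroup G]

/-- `S` is a zero-sum sequence over `G₀`: a multiset with entries in `G₀` and sum `0`. -/
def IsZeroSumSeq (G₀ : Set G) (S : Multiset G) : Prop :=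
  (∀ x ∈ S, x ∈ G₀) ∧ S.sum = 0

/-- `S` is an atom over `G₀`: a nonempty zero-sum sequence over `G₀` that is not the
union of two nonempty zero-sum sequences over `G₀`. -/
def IsAtomSeq (G₀ : Set G) (S : Multiset G) : Prop :=
  IsZeroSumSeq G₀ S ∧ S ≠ 0 ∧
    ∀ A B : Multiset G, IsZeroSumSeq G₀ A → IsZeroSumSeq G₀ B →
      A ≠ 0 → B ≠ 0 → S ≠ A + B

/-- The set of lengths of `B`: all `k` such that `B` is a union of `k` atoms over `G₀`. -/
def LengthSet (G₀ : Set G) (B : Multiset G) : Set ℕ :=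
  {k | ∃ l : Multiset (Multiset G), Multiset.card l = k ∧
      (∀ A ∈ l, IsAtomSeq G₀ A) ∧ l.sum = B}

/-- The set of successive distances of a set of naturals. -/
def DeltaOf (L : Set ℕ) : Set ℕ :=
  {d | ∃ x ∈ L, ∃ y ∈ L, x < y ∧ y - x = d ∧ ∀ z ∈ L, ¬(x < z ∧ z < y)}

/-- The set of distances `Δ(G₀)`. -/
def DeltaSet (G₀ : Set G) : Set ℕ :=
  {d | ∃ B : Multiset G, IsZeroSumSeq G₀ B ∧ B ≠ 0 ∧ d ∈ DeltaOf (LengthSet G₀ B)}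

/-- `G₀` is half-factorial if `Δ(G₀) = ∅`. -/
def IsHalfFactorialSet (G₀ : Set G) : Prop := DeltaSet G₀ = ∅

/-- `G₀` is minimal non-half-factorial if `Δ(G₀) ≠ ∅` and every proper subset is
half-factorial. -/
def IsMinNonHalfFactorial (G₀ : Set G) : Prop :=
  (DeltaSet G₀).Nonempty ∧ ∀ G₁ : Set G, G₁ ⊂ G₀ → DeltaSet G₁ = ∅

/-- The cross number `k(S) = Σ 1/ord(g)` of a multiset over `G`. -/
noncomputable def crossNumber (S : Multiset G) : ℚ :=
  (S.map (fun g => ((addOrderOf g : ℚ))⁻¹)).sum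

/-- `G₀` is an LCN-set if every atom over `G₀` has cross number at least 1. -/
def IsLCNSet (G₀ : Set G) : Prop :=
  ∀ U : Multiset G, IsAtomSeq G₀ U → 1 ≤ crossNumber U

/-- A subset of `G \ {0}` is independent if any integral linear relation on its elements
has all summands zero. -/
def IsIndependentSet (E : Set G) : Prop :=
  (0 : G) ∉ E ∧ ∀ s : Finset G, ↑s ⊆ E → ∀ f : G → ℤ,
    (∑ e ∈ s, f e • e) = 0 → ∀ e ∈ s, f e • e = 0

/-- `d` is a greatest common divisor of the set `S` of naturals. -/
def IsSetGcd (S : Set ℕ) (d : ℕ) : Prop :=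
  (∀ s ∈ S, d ∣ s) ∧ ∀ e : ℕ, (∀ s ∈ S, e ∣ s) → e ∣ d

end Defs

/-- The set of minimal distances `Δ*(G)`. -/
def DeltaStar (G : Type*) [AddCommGroup G] : Set ℕ :=
  {d | ∃ G₀ : Set G, (DeltaSet G₀).Nonempty ∧ d = sInf (DeltaSet G₀)}

/-- The `p`-rank of a finite abelian group: `log_p` of the order of the `p`-torsion
subgroup `{x | p • x = 0}`. -/
noncomputable def pRank (G : Type*) [AddCommGroup G] (p : ℕ) : ℕ :=
  Nat.log p (Nat.card {x : G // p • x = 0})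

/-- The rank of a finite abelian group: the maximum of the `p`-ranks over all primes. -/
noncomputable def rankG (G : Type*) [AddCommGroup G] : ℕ :=
  sSup {r : ℕ | ∃ p : ℕ, p.Prime ∧ r = pRank G p}

set_option linter.unusedSectionVars false

namespace Aux

section
variable {G : Type*} [AddCommGroup G]

/-- The multiset consisting of `ord g` copies of `g`. -/
noncomputable def ordSeq (g : G) : Multiset G := Multiset.replicate (addOrderOf g) g

lemma zs_zero (S : Set G) : IsZeroSumSeq S 0 := by
  constructor <;> simp

lemma zs_add {S : Set G} {A B : Multiset G} (hA : IsZeroSumSeq S A) (hB : IsZeroSumSeq S B) :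
    IsZeroSumSeq S (A + B) := by
  refine ⟨fun x hx => ?_, by rw [Multiset.sum_add, hA.2, hB.2, add_zero]⟩
  rcases Multiset.mem_add.1 hx with h | h
  · exact hA.1 x h
  · exact hB.1 x h

lemma zs_right {S : Set G} {A B C : Multiset G} (hC : IsZeroSumSeq S C) (hA : IsZeroSumSeq S A)
    (h : A + B = C) : IsZeroSumSeq S B := by
  subst h
  refine ⟨fun x hx => hC.1 x (Multiset.mem_add.2 (Or.inr hx)), ?_⟩
  have := hC.2
  rwa [Multiset.sum_add, hA.2, zero_add] at this

lemma zs_sum {S : Set G} (l : Multiset (Multiset G)) (h : ∀ A ∈ l, IsZeroSumSeq S A) :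
    IsZeroSumSeq S l.sum := by
  induction l using Multiset.induction_on with
  | empty => simpa using zs_zero S
  | cons a l ih =>
    rw [Multiset.sum_cons]
    exact zs_add (h a (by simp)) (ih fun A hA => h A (by simp [hA]))

lemma zs_mono {S T : Set G} (hST : S ⊆ T) {A : Multiset G} (hA : IsZeroSumSeq S A) :
    IsZeroSumSeq T A := ⟨fun x hx => hST (hA.1 x hx), hA.2⟩

lemma atom_mono {S T : Set G} (hST : S ⊆ T) {A : Multiset G} (hA : IsAtomSeq S A) :
    IsAtomSeq T A := by
  refine ⟨zs_mono hST hA.1, hA.2.1, fun X Y hX hY hX0 hY0 h => ?_⟩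
  refine hA.2.2 X Y ⟨fun x hx => hA.1.1 x ?_, hX.2⟩ ⟨fun x hx => hA.1.1 x ?_, hY.2⟩ hX0 hY0 h
  · rw [h]; exact Multiset.mem_add.2 (Or.inl hx)
  · rw [h]; exact Multiset.mem_add.2 (Or.inr hx)

lemma atom_restrict {S T : Set G} (hST : S ⊆ T) {A : Multiset G} (hA : IsAtomSeq T A)
    (hS : ∀ x ∈ A, x ∈ S) : IsAtomSeq S A :=
  ⟨⟨hS, hA.1.2⟩, hA.2.1, fun X Y hX hY hX0 hY0 h =>
    hA.2.2 X Y (zs_mono hST hX) (zs_mono hST hY) hX0 hY0 h⟩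

/-- an atom containing a nonempty zero-sum sequence equals it -/
lemma atom_eq_of_le {S : Set G} {A B : Multiset G} (hA : IsAtomSeq S A)
    (hB : IsZeroSumSeq S B) (hB0 : B ≠ 0) (hle : B ≤ A) : A = B := by
  obtain ⟨C, hC⟩ := Multiset.le_iff_exists_add.1 hle
  by_cases hC0 : C = 0
  · simp [hC, hC0]
  · exact absurd hC (hA.2.2 B C hB (zs_right hA.1 hB hC.symm) hB0 hC0)

lemma exists_factorization {S : Set G} (B : Multiset G) (hB : IsZeroSumSeq S B) :
    ∃ l : Multiset (Multiset G), (∀ A ∈ l, IsAtomSeq S A) ∧ l.sum = B := by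
  induction hn : Multiset.card B using Nat.strong_induction_on generalizing B with
  | _ n ih =>
    by_cases h0 : B = 0
    · exact ⟨0, by simp, by simp [h0]⟩
    by_cases hat : IsAtomSeq S B
    · exact ⟨{B}, by simpa using hat, by simp⟩
    · have : ∃ X Y : Multiset G, IsZeroSumSeq S X ∧ IsZeroSumSeq S Y ∧ X ≠ 0 ∧ Y ≠ 0 ∧
          B = X + Y := by
        by_contra hcon
        push Not at hcon
        exact hat ⟨hB, h0, fun X Y hX hY hX0 hY0 => hcon X Y hX hY hX0 hY0⟩
      obtain ⟨X, Y, hX, hY, hX0, hY0, h⟩ := this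
      have hXc := Multiset.card_pos.2 hX0
      have hYc := Multiset.card_pos.2 hY0
      have hc : Multiset.card B = Multiset.card X + Multiset.card Y := by
        rw [h, Multiset.card_add]
      obtain ⟨l1, h1, h1'⟩ := ih (Multiset.card X) (by omega) X hX rfl
      obtain ⟨l2, h2, h2'⟩ := ih (Multiset.card Y) (by omega) Y hY rfl
      refine ⟨l1 + l2, fun A hA => ?_, by rw [Multiset.sum_add, h1', h2', h]⟩
      rcases Multiset.mem_add.1 hA with h | h
      · exact h1 A h
      · exact h2 A h

lemma k_zero : crossNumber (0 : Multiset G) = 0 := by simp [crossNumber]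

lemma k_add (A B : Multiset G) : crossNumber (A + B) = crossNumber A + crossNumber B := by
  simp [crossNumber]

lemma k_nonneg (A : Multiset G) : 0 ≤ crossNumber A := by
  apply Multiset.sum_nonneg
  intro x hx
  obtain ⟨g, -, rfl⟩ := Multiset.mem_map.1 hx
  positivity

lemma k_sum_one (l : Multiset (Multiset G)) (h : ∀ A ∈ l, crossNumber A = 1) :
    crossNumber l.sum = Multiset.card l := by
  induction l using Multiset.induction_on with
  | empty => simp [k_zero]
  | cons a l ih =>
    rw [Multiset.sum_cons, k_add, h a (by simp), ih fun A hA => h A (by simp [hA])]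
    simp [add_comm]

lemma k_sum_ge (l : Multiset (Multiset G)) (h : ∀ A ∈ l, 1 ≤ crossNumber A) :
    (Multiset.card l : ℚ) ≤ crossNumber l.sum := by
  induction l using Multiset.induction_on with
  | empty => simp [k_zero]
  | cons a l ih =>
    rw [Multiset.sum_cons, k_add]
    have h1 := h a (by simp)
    have h2 := ih fun A hA => h A (by simp [hA])
    push_cast [Multiset.card_cons]
    linarith

lemma zs_ordSeq {S : Set G} {g : G} (hg : g ∈ S) : IsZeroSumSeq S (ordSeq g) := by
  refine ⟨fun x hx => ?_, ?_⟩
  · rw [Multiset.eq_of_mem_replicate hx]; exact hg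
  · simp [ordSeq, addOrderOf_nsmul_eq_zero]

/-- a strictly ascending pair of lengths bounds the minimal distance -/
lemma exists_delta {S : Set G} {B : Multiset G} (hB : IsZeroSumSeq S B) {a b : ℕ}
    (ha : a ∈ LengthSet S B) (hb : b ∈ LengthSet S B) (hab : a < b) :
    ∃ d ∈ DeltaSet S, d ≤ b - a := by
  classical
  have hex : ∃ y, y ∈ LengthSet S B ∧ a < y := ⟨b, hb, hab⟩
  obtain ⟨hy1, hy2⟩ := Nat.find_spec hex
  have hyb : Nat.find hex ≤ b := Nat.find_min' hex ⟨hb, hab⟩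
  refine ⟨Nat.find hex - a, ⟨B, hB, ?_, a, ha, _, hy1, hy2, rfl, ?_⟩, by omega⟩
  · rintro rfl
    obtain ⟨l, hl, hl1, hl2⟩ := hb
    have : l = 0 := by
      by_contra hne
      obtain ⟨A, hA⟩ := Multiset.exists_mem_of_ne_zero hne
      have h1 := Multiset.le_sum_of_mem hA
      rw [hl2] at h1
      exact (hl1 A hA).2.1 (Multiset.le_zero.1 h1)
    rw [this] at hl
    simp at hl
    omega
  · rintro z hz ⟨h1, h2⟩
    exact Nat.find_min hex h2 ⟨hz, h1⟩

lemma sInf_le_of_lengths {S : Set G} {B : Multiset G} (hB : IsZeroSumSeq S B) {a b : ℕ}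
    (ha : a ∈ LengthSet S B) (hb : b ∈ LengthSet S B) (hab : a < b) :
    sInf (DeltaSet S) ≤ b - a := by
  obtain ⟨d, hd, hle⟩ := exists_delta hB ha hb hab
  exact (Nat.sInf_le hd).trans hle

lemma delta_pos {S : Set G} {d : ℕ} (hd : d ∈ DeltaSet S) : 0 < d := by
  obtain ⟨B, -, -, x, -, y, -, h1, h2, -⟩ := hd
  omega

end

section
variable {G : Type*} [AddCommGroup G] [Fintype G]

lemma ordSeq_ne_zero (g : G) : ordSeq g ≠ 0 := by
  intro h
  have := congrArg Multiset.card h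
  simp [ordSeq] at this
  exact (addOrderOf_pos g).ne' (by simpa using this)

lemma k_ordSeq (g : G) : crossNumber (ordSeq g) = 1 := by
  have h : (addOrderOf g : ℚ) ≠ 0 := by exact_mod_cast (addOrderOf_pos g).ne'
  simp [crossNumber, ordSeq, h]

lemma atom_ordSeq {S : Set G} {g : G} (hg : g ∈ S) : IsAtomSeq S (ordSeq g) := by
  refine ⟨zs_ordSeq hg, ordSeq_ne_zero g, fun X Y hX hY hX0 hY0 h => ?_⟩
  have hXr : X = Multiset.replicate (Multiset.card X) g := by
    rw [Multiset.eq_replicate_card]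
    intro b hb
    have : b ∈ ordSeq g := by rw [h]; exact Multiset.mem_add.2 (Or.inl hb)
    exact Multiset.eq_of_mem_replicate this
  have h0 : Multiset.card X • g = 0 := by
    have := hX.2
    rw [hXr] at this
    simpa using this
  have hdvd := addOrderOf_dvd_of_nsmul_eq_zero h0
  have hXc := Multiset.card_pos.2 hX0
  have hYc := Multiset.card_pos.2 hY0
  have hc := congrArg Multiset.card h
  rw [Multiset.card_add] at hc
  simp only [ordSeq, Multiset.card_replicate] at hc
  have := Nat.le_of_dvd hXc hdvd
  omega

/-- exponent times a sequence is a union of sequences `ordSeq g`. -/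
lemma exp_nsmul (A : Multiset G) : ∃ J : Multiset G, (∀ g ∈ J, g ∈ A) ∧
    (J.map ordSeq).sum = AddMonoid.exponent G • A := by
  induction A using Multiset.induction_on with
  | empty => exact ⟨0, by simp, by simp⟩
  | cons a A ih =>
    obtain ⟨J, h1, h2⟩ := ih
    obtain ⟨t, ht⟩ := AddMonoid.addOrder_dvd_exponent a
    refine ⟨Multiset.replicate t a + J, fun g hg => ?_, ?_⟩
    · rcases Multiset.mem_add.1 hg with h | h
      · rw [Multiset.eq_of_mem_replicate h]; simp
      · exact Multiset.mem_cons_of_mem (h1 g h)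
    · rw [Multiset.map_add, Multiset.sum_add, h2, ← Multiset.singleton_add, nsmul_add]
      congr 1
      rw [Multiset.map_replicate, Multiset.sum_replicate, ordSeq, Multiset.nsmul_singleton,
        Multiset.nsmul_replicate, ht, mul_comm]

lemma exp_pos : 0 < AddMonoid.exponent G :=
  Nat.pos_of_ne_zero AddMonoid.exponent_ne_zero_of_finite

lemma k_sum_ordSeq (J : Multiset G) : crossNumber (J.map ordSeq).sum = Multiset.card J := by
  rw [k_sum_one]
  · simp
  · intro A hA
    obtain ⟨g, -, rfl⟩ := Multiset.mem_map.1 hA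
    exact k_ordSeq g

lemma k_nsmul (m : ℕ) (A : Multiset G) : crossNumber (m • A) = m * crossNumber A := by
  induction m with
  | zero => simp [k_zero]
  | succ m ih => rw [succ_nsmul, k_add, ih]; push_cast; ring

lemma length_ord {S : Set G} {J : Multiset G} (hJ : ∀ g ∈ J, g ∈ S) :
    Multiset.card J ∈ LengthSet S (J.map ordSeq).sum := by
  refine ⟨J.map ordSeq, by simp, fun A hA => ?_, rfl⟩
  obtain ⟨g, hg, rfl⟩ := Multiset.mem_map.1 hA
  exact atom_ordSeq (hJ g hg)

lemma zs_ords {S : Set G} {J : Multiset G} (hJ : ∀ g ∈ J, g ∈ S) :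
    IsZeroSumSeq S (J.map ordSeq).sum := by
  apply zs_sum
  intro A hA
  obtain ⟨g, hg, rfl⟩ := Multiset.mem_map.1 hA
  exact zs_ordSeq (hJ g hg)

lemma k_one_of_hf {S : Set G} (hS : DeltaSet S = ∅) {U : Multiset G} (hU : IsAtomSeq S U) :
    crossNumber U = 1 := by
  obtain ⟨J, hJ1, hJ2⟩ := exp_nsmul U
  have hJS : ∀ g ∈ J, g ∈ S := fun g hg => hU.1.1 g (hJ1 g hg)
  have l1 := length_ord hJS
  have l2 : AddMonoid.exponent G ∈ LengthSet S (J.map ordSeq).sum := by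
    refine ⟨Multiset.replicate (AddMonoid.exponent G) U, by simp, fun A hA => ?_, by simp [hJ2]⟩
    rw [Multiset.eq_of_mem_replicate hA]; exact hU
  have hk : (Multiset.card J : ℚ) = AddMonoid.exponent G * crossNumber U := by
    rw [← k_sum_ordSeq, hJ2, k_nsmul]
  have hn : (AddMonoid.exponent G : ℚ) ≠ 0 := by exact_mod_cast (exp_pos (G := G)).ne'
  rcases lt_trichotomy (Multiset.card J) (AddMonoid.exponent G) with h | h | h
  · obtain ⟨d, hd, -⟩ := exists_delta (zs_ords hJS) l1 l2 h
    simp [hS] at hd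
  · rw [h] at hk
    field_simp at hk
    exact hk.symm
  · obtain ⟨d, hd, -⟩ := exists_delta (zs_ords hJS) l2 l1 h
    simp [hS] at hd

lemma exists_bad {S : Set G} (hS : (DeltaSet S).Nonempty) :
    ∃ U, IsAtomSeq S U ∧ crossNumber U ≠ 1 := by
  by_contra hcon
  push Not at hcon
  obtain ⟨d, B, -, -, x, ⟨l, hl, hl1, hl2⟩, y, ⟨l', hl', hl1', hl2'⟩, hxy, -⟩ := hS
  have h1 := k_sum_one l fun A hA => hcon A (hl1 A hA)
  have h2 := k_sum_one l' fun A hA => hcon A (hl1' A hA)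
  rw [hl2] at h1
  rw [hl2'] at h2
  have : (Multiset.card l : ℚ) = Multiset.card l' := by rw [← h1, ← h2]
  have : Multiset.card l = Multiset.card l' := by exact_mod_cast this
  omega

lemma delta_nonempty {S : Set G} {U : Multiset G} (hU : IsAtomSeq S U) (h : crossNumber U ≠ 1) :
    (DeltaSet S).Nonempty := by
  by_contra hcon
  exact h (k_one_of_hf (Set.not_nonempty_iff_eq_empty.1 hcon) hU)

/-- bad atoms of a minimal non-half-factorial set have full support -/
lemma full_support {S : Set G} (hmin : IsMinNonHalfFactorial S) {U : Multiset G}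
    (hU : IsAtomSeq S U) (h : crossNumber U ≠ 1) {g : G} (hg : g ∈ S) : g ∈ U := by
  by_contra hgU
  have hss : S \ {g} ⊂ S := by
    refine ⟨Set.sdiff_subset, fun hh => ?_⟩
    exact (hh hg).2 rfl
  refine h (k_one_of_hf (hmin.2 _ hss) (atom_restrict hss.1 hU fun x hx => ⟨hU.1.1 x hx, ?_⟩))
  rintro rfl
  exact hgU hx

lemma count_lt_ord [DecidableEq G] {S : Set G} {U : Multiset G}
    (hU : IsAtomSeq S U) (h : crossNumber U ≠ 1) {g : G} (hg : g ∈ S) :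
    Multiset.count g U < addOrderOf g := by
  by_contra hcon
  push Not at hcon
  have := atom_eq_of_le hU (zs_ordSeq hg) (ordSeq_ne_zero g) (Multiset.le_count_iff_replicate_le.1 hcon)
  exact h (by rw [this, k_ordSeq])

/-- Lemma III -/
lemma delta_add_two_le (s : Finset G) (hmin : IsMinNonHalfFactorial (s : Set G))
    (hLCN : IsLCNSet (s : Set G)) : sInf (DeltaSet (s : Set G)) + 2 ≤ s.card := by
  classical
  obtain ⟨W, hW, hWk⟩ := exists_bad hmin.1
  have hWk1 : 1 < crossNumber W := lt_of_le_of_ne (hLCN W hW) (Ne.symm hWk)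
  have hJ : ∀ g ∈ s.val, g ∈ (s : Set G) := fun g hg => hg
  set P := (s.val.map ordSeq).sum with hP
  have hPz : IsZeroSumSeq (s : Set G) P := zs_ords hJ
  have hcount : ∀ g ∈ s, addOrderOf g ≤ Multiset.count g P := by
    intro g hg
    rw [Multiset.le_count_iff_replicate_le]
    have hmem : ordSeq g ∈ s.val.map ordSeq := Multiset.mem_map.2 ⟨g, hg, rfl⟩
    exact Multiset.le_sum_of_mem hmem
  have hle : W ≤ P := by
    rw [Multiset.le_iff_count]
    intro g
    by_cases hg : g ∈ s
    · exact (count_lt_ord hW hWk hg).le.trans (hcount g hg)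
    · rw [Multiset.count_eq_zero_of_notMem fun h => hg (hW.1.1 g h)]
      exact Nat.zero_le _
  obtain ⟨T, hT⟩ := Multiset.le_iff_exists_add.1 hle
  have hTz : IsZeroSumSeq (s : Set G) T := zs_right hPz hW.1 hT.symm
  obtain ⟨l, hl1, hl2⟩ := exists_factorization T hTz
  have hlen1 : s.card ∈ LengthSet (s : Set G) P := length_ord hJ
  have hlen2 : Multiset.card l + 1 ∈ LengthSet (s : Set G) P := by
    refine ⟨W ::ₘ l, by simp, fun A hA => ?_, by rw [Multiset.sum_cons, hl2, hT]⟩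
    rcases Multiset.mem_cons.1 hA with rfl | h
    · exact hW
    · exact hl1 A h
  have hk1 : (Multiset.card l : ℚ) ≤ crossNumber T := by
    rw [← hl2]
    exact k_sum_ge l fun A hA => hLCN A (hl1 A hA)
  have hk2 : crossNumber W + crossNumber T = s.card := by
    rw [← k_add, ← hT, hP, k_sum_ordSeq]; rfl
  have hlt : Multiset.card l + 1 < s.card := by
    have : (Multiset.card l : ℚ) + 1 < s.card := by linarith
    exact_mod_cast this
  have hlpos : 0 < Multiset.card l := by
    rw [Multiset.card_pos]
    rintro rfl
    simp at hl2
    obtain ⟨g, hg⟩ := Multiset.exists_mem_of_ne_zero hW.2.1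
    have h1 := count_lt_ord hW hWk (hW.1.1 g hg)
    have h2 := hcount g (hW.1.1 g hg)
    rw [hT, ← hl2, add_zero] at h2
    omega
  have := sInf_le_of_lengths hPz hlen2 hlen1 hlt
  omega

end

section
variable {G : Type*} [AddCommGroup G] [Fintype G] [DecidableEq G]

/-- multiset with prescribed multiplicities on `s` -/
def mk (s : Finset G) (f : G → ℕ) : Multiset G := ∑ g ∈ s, Multiset.replicate (f g) g

lemma count_mk (s : Finset G) (f : G → ℕ) (g : G) :
    Multiset.count g (mk s f) = if g ∈ s then f g else 0 := by
  rw [mk, Multiset.count_sum']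
  simp [Multiset.count_replicate]

lemma sum_mk (s : Finset G) (f : G → ℕ) : (mk s f).sum = ∑ g ∈ s, f g • g := by
  rw [mk, Multiset.sum_sum]
  simp

lemma mem_of_mem_mk {s : Finset G} {f : G → ℕ} {g : G} (h : g ∈ mk s f) : g ∈ s ∧ f g ≠ 0 := by
  have := Multiset.count_pos.2 h
  rw [count_mk] at this
  split_ifs at this with hs
  · exact ⟨hs, by omega⟩
  · omega

lemma count_ords (J : Multiset G) (g : G) :
    Multiset.count g (J.map ordSeq).sum = Multiset.count g J * addOrderOf g := by
  induction J using Multiset.induction_on with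
  | empty => simp
  | cons a J ih =>
    rw [Multiset.map_cons, Multiset.sum_cons, Multiset.count_add, ih, ordSeq,
      Multiset.count_replicate, Multiset.count_cons]
    by_cases h : a = g
    · subst h; simp; ring
    · simp [h, Ne.symm h]

lemma sum_eq_mk {s : Finset G} {A : Multiset G} (hA : ∀ x ∈ A, x ∈ s) :
    A.sum = ∑ g ∈ s, Multiset.count g A • g := by
  have : A = mk s fun g => Multiset.count g A := by
    ext g
    rw [count_mk]
    split_ifs with h
    · rfl
    · exact Multiset.count_eq_zero_of_notMem fun h' => h (hA g h')
  conv_lhs => rw [this]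
  exact sum_mk _ _

/-- The lattice of relations. -/
def Lam (s : Finset G) : AddSubgroup (G → ℤ) where
  carrier := {x | (∀ g, g ∉ s → x g = 0) ∧ ∑ g ∈ s, x g • g = 0}
  zero_mem' := by simp
  add_mem' := by
    rintro x y ⟨h1, h2⟩ ⟨h3, h4⟩
    refine ⟨fun g hg => by simp [h1 g hg, h3 g hg], ?_⟩
    simp [add_smul, Finset.sum_add_distrib, h2, h4]
  neg_mem' := by
    rintro x ⟨h1, h2⟩
    exact ⟨fun g hg => by simp [h1 g hg], by simp [h2]⟩

lemma mem_Lam {s : Finset G} {x : G → ℤ} :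
    x ∈ Lam s ↔ (∀ g, g ∉ s → x g = 0) ∧ ∑ g ∈ s, x g • g = 0 := Iff.rfl

/-- The sublattice generated by relations over proper subsets. -/
def LamP (s : Finset G) : AddSubgroup (G → ℤ) :=
  AddSubgroup.closure {x | x ∈ Lam s ∧ ∃ h ∈ s, x h = 0}

lemma mem_LamP_of_zero {s : Finset G} {x : G → ℤ} (hx : x ∈ Lam s) {h : G} (hs : h ∈ s)
    (h0 : x h = 0) : x ∈ LamP s := AddSubgroup.subset_closure ⟨hx, h, hs, h0⟩

lemma LamP_le (s : Finset G) : LamP s ≤ Lam s := by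
  rw [LamP, AddSubgroup.closure_le]
  exact fun x hx => hx.1

/-- representability through atoms of cross number one -/
def Rep (s : Finset G) (x : G → ℤ) : Prop :=
  ∃ (J : Multiset G) (l : Multiset (Multiset G)), (∀ g ∈ J, g ∈ s) ∧
    (∀ A ∈ l, IsAtomSeq (s : Set G) A ∧ crossNumber A = 1) ∧
    ∀ g, x g + (Multiset.count g (J.map ordSeq).sum : ℤ) = (Multiset.count g l.sum : ℤ)

lemma rep_zero (s : Finset G) : Rep s 0 := ⟨0, 0, by simp, by simp, by simp⟩

lemma rep_add {s : Finset G} {x y : G → ℤ} (hx : Rep s x) (hy : Rep s y) : Rep s (x + y) := by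
  obtain ⟨J, l, h1, h2, h3⟩ := hx
  obtain ⟨J', l', h1', h2', h3'⟩ := hy
  refine ⟨J + J', l + l', fun g hg => ?_, fun g hg => ?_, fun g => ?_⟩
  · rcases Multiset.mem_add.1 hg with h | h
    · exact h1 g h
    · exact h1' g h
  · rcases Multiset.mem_add.1 hg with h | h
    · exact h2 g h
    · exact h2' g h
  · have a := h3 g
    have b := h3' g
    rw [Multiset.map_add, Multiset.sum_add, Multiset.sum_add, Multiset.count_add,
      Multiset.count_add, Pi.add_apply]
    push_cast
    linarith

lemma rep_neg {s : Finset G} {x : G → ℤ} (hx : Rep s x) : Rep s (-x) := by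
  obtain ⟨J, l, h1, h2, h3⟩ := hx
  obtain ⟨J', h4, h5⟩ := exp_nsmul l.sum
  have hz : IsZeroSumSeq (s : Set G) l.sum := zs_sum l fun A hA => (h2 A hA).1.1
  refine ⟨J', J.map ordSeq + (AddMonoid.exponent G - 1) • l, fun g hg => hz.1 g (h4 g hg),
    fun A hA => ?_, fun g => ?_⟩
  · rcases Multiset.mem_add.1 hA with h | h
    · obtain ⟨g, hg, rfl⟩ := Multiset.mem_map.1 h
      exact ⟨atom_ordSeq (h1 g hg), k_ordSeq g⟩
    · exact h2 A (Multiset.mem_of_mem_nsmul h)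
  · rw [h5, Multiset.sum_add, Multiset.count_add, Multiset.count_nsmul, Multiset.sum_nsmul,
      Multiset.count_nsmul, Pi.neg_apply]
    have := h3 g
    push_cast [Nat.cast_sub (exp_pos (G := G))]
    linarith

lemma rep_of_zero {s : Finset G} (hmin : IsMinNonHalfFactorial (s : Set G)) {x : G → ℤ}
    (hx : x ∈ Lam s) {h : G} (hs : h ∈ s) (h0 : x h = 0) : Rep s x := by
  set f : G → ℕ := fun g => (x g + (x g).natAbs * addOrderOf g).toNat with hf
  have hfc : ∀ g, (f g : ℤ) = x g + (x g).natAbs * addOrderOf g := by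
    intro g
    apply Int.toNat_of_nonneg
    have h1 : (1 : ℤ) ≤ addOrderOf g := by exact_mod_cast addOrderOf_pos g
    have h2 : - x g ≤ (x g).natAbs := by omega
    nlinarith [Int.natCast_nonneg (x g).natAbs]
  set S : Set G := (s : Set G) \ {h} with hS
  have hss : S ⊂ (s : Set G) := ⟨Set.sdiff_subset, fun hh => (hh hs).2 rfl⟩
  have hz : IsZeroSumSeq S (mk s f) := by
    constructor
    · intro g hg
      obtain ⟨h1, h2⟩ := mem_of_mem_mk hg
      refine ⟨h1, ?_⟩
      rintro rfl
      apply h2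
      simp [hf, h0]
    · rw [sum_mk, ← hx.2]
      apply Finset.sum_congr rfl
      intro g _
      rw [← natCast_zsmul, hfc, add_smul, mul_smul, natCast_zsmul g (addOrderOf g),
        addOrderOf_nsmul_eq_zero, smul_zero, add_zero]
  obtain ⟨l, hl1, hl2⟩ := exists_factorization _ hz
  refine ⟨mk s fun g => (x g).natAbs, l, fun g hg => (mem_of_mem_mk hg).1,
    fun A hA => ⟨atom_mono hss.1 (hl1 A hA), k_one_of_hf (hmin.2 _ hss) (hl1 A hA)⟩, fun g => ?_⟩
  rw [hl2, count_ords, count_mk, count_mk]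
  split_ifs with hg
  · rw [hfc]; push_cast; rfl
  · simp [hx.1 g hg]

lemma rep_of_LamP {s : Finset G} (hmin : IsMinNonHalfFactorial (s : Set G)) {x : G → ℤ}
    (hx : x ∈ LamP s) : Rep s x := by
  induction hx using AddSubgroup.closure_induction with
  | mem x hx =>
    obtain ⟨h1, h, hs, h0⟩ := hx
    exact rep_of_zero hmin h1 hs h0
  | zero => exact rep_zero s
  | add x y _ _ hx hy => exact rep_add hx hy
  | neg x _ hx => exact rep_neg hx

lemma rep_of_zs {s : Finset G} (hmin : IsMinNonHalfFactorial (s : Set G))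
    (hL : Lam s ≤ LamP s) {B : Multiset G} (hB : IsZeroSumSeq (s : Set G) B) :
    ∃ (J : Multiset G) (l : Multiset (Multiset G)), (∀ g ∈ J, g ∈ s) ∧
    (∀ A ∈ l, IsAtomSeq (s : Set G) A ∧ crossNumber A = 1) ∧ B + (J.map ordSeq).sum = l.sum := by
  have hx : (fun g => (Multiset.count g B : ℤ)) ∈ Lam s := by
    refine ⟨fun g hg => ?_, ?_⟩
    · show (Multiset.count g B : ℤ) = 0
      rw [Multiset.count_eq_zero_of_notMem fun h' => hg (hB.1 g h')]; rfl
    · have := sum_eq_mk (s := s) (A := B) hB.1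
      rw [hB.2] at this
      rw [this]
      simp
  obtain ⟨J, l, h1, h2, h3⟩ := rep_of_LamP hmin (hL hx)
  refine ⟨J, l, h1, h2, ?_⟩
  ext g
  rw [Multiset.count_add]
  have h := h3 g
  dsimp only at h
  exact_mod_cast h

lemma bad_atom_bound {s : Finset G} (hmin : IsMinNonHalfFactorial (s : Set G))
    (hLCN : IsLCNSet (s : Set G)) (hL : Lam s ≤ LamP s) {W : Multiset G}
    (hW : IsAtomSeq (s : Set G) W) (hk : crossNumber W ≠ 1) :
    1 + ((sInf (DeltaSet (s : Set G)) : ℕ) : ℚ) ≤ crossNumber W := by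
  have hWk1 : 1 < crossNumber W := lt_of_le_of_ne (hLCN W hW) (Ne.symm hk)
  obtain ⟨J, l, h1, h2, h3⟩ := rep_of_zs hmin hL hW.1
  have hkk : crossNumber W + Multiset.card J = Multiset.card l := by
    rw [← k_sum_ordSeq, ← k_add, h3, k_sum_one l fun A hA => (h2 A hA).2]
  have hlt : Multiset.card J + 1 < Multiset.card l := by
    have : (Multiset.card J : ℚ) + 1 < Multiset.card l := by linarith
    exact_mod_cast this
  have hl2 : Multiset.card l ∈ LengthSet (s : Set G) l.sum := ⟨l, rfl, fun A hA => (h2 A hA).1, rfl⟩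
  have hl1 : Multiset.card J + 1 ∈ LengthSet (s : Set G) l.sum := by
    refine ⟨W ::ₘ J.map ordSeq, by simp, fun A hA => ?_, by rw [Multiset.sum_cons, h3]⟩
    rcases Multiset.mem_cons.1 hA with rfl | h
    · exact hW
    · obtain ⟨g, hg, rfl⟩ := Multiset.mem_map.1 h
      exact atom_ordSeq (h1 g hg)
  have hd := sInf_le_of_lengths (zs_sum l fun A hA => (h2 A hA).1.1) hl1 hl2 hlt
  have hd' : sInf (DeltaSet (s : Set G)) + (Multiset.card J + 1) ≤ Multiset.card l := by omega
  have hd'' : ((sInf (DeltaSet (s : Set G)) : ℕ) : ℚ) + (Multiset.card J + 1) ≤ Multiset.card l := by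
    exact_mod_cast hd'
  linarith

lemma card_le_count (l : Multiset (Multiset G)) (g : G) (h : ∀ A ∈ l, 1 ≤ Multiset.count g A) :
    Multiset.card l ≤ Multiset.count g l.sum := by
  induction l using Multiset.induction_on with
  | empty => simp
  | cons a l ih =>
    rw [Multiset.sum_cons, Multiset.count_add, Multiset.card_cons]
    have h1 := h a (by simp)
    have h2 := ih fun A hA => h A (by simp [hA])
    omega

lemma good_induction {s : Finset G} (hmin : IsMinNonHalfFactorial (s : Set G))
    (hLCN : IsLCNSet (s : Set G)) (hL : Lam s ≤ LamP s)
    (hn : AddMonoid.exponent G ≤ sInf (DeltaSet (s : Set G)) + 2) (C : ℕ) :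
    ∀ (l : Multiset (Multiset G)) (J B : Multiset G), Multiset.card l = C →
      (∀ A ∈ l, IsAtomSeq (s : Set G) A ∧ crossNumber A = 1) → (∀ g ∈ J, g ∈ s) →
      B + (J.map ordSeq).sum = l.sum →
      ∃ l' : Multiset (Multiset G), (∀ A ∈ l', IsAtomSeq (s : Set G) A ∧ crossNumber A = 1) ∧
        l'.sum = B := by
  induction C using Nat.strong_induction_on with
  | _ C ih =>
    intro l J B hC hl hJ hB
    by_contra hcon
    have hD : 0 < sInf (DeltaSet (s : Set G)) := delta_pos (Nat.sInf_mem hmin.1)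
    have hzl : IsZeroSumSeq (s : Set G) l.sum := zs_sum l fun A hA => (hl A hA).1.1
    have hzB : IsZeroSumSeq (s : Set G) B :=
      zs_right hzl (zs_ords (S := (s : Set G)) hJ) (by rw [add_comm]; exact hB)
    -- a bad atom inside B
    obtain ⟨m, hm1, hm2⟩ := exists_factorization B hzB
    have hbad : ∃ W ∈ m, crossNumber W ≠ 1 := by
      by_contra h
      push Not at h
      exact hcon ⟨m, fun A hA => ⟨hm1 A hA, h A hA⟩, hm2⟩
    obtain ⟨W, hWm, hWk⟩ := hbad
    have hWB : W ≤ B := by rw [← hm2]; exact Multiset.le_sum_of_mem hWm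
    have hWkB : crossNumber W ≤ crossNumber B := by
      obtain ⟨R, rfl⟩ := Multiset.le_iff_exists_add.1 hWB
      rw [k_add]
      linarith [k_nonneg R]
    have hbound := bad_atom_bound hmin hLCN hL (hm1 W hWm) hWk
    have hkB : crossNumber B + Multiset.card J = Multiset.card l := by
      rw [← k_sum_ordSeq, ← k_add, hB, k_sum_one l fun A hA => (hl A hA).2]
    have hC1 : 1 + sInf (DeltaSet (s : Set G)) + Multiset.card J ≤ C := by
      have : 1 + ((sInf (DeltaSet (s : Set G)) : ℕ) : ℚ) + Multiset.card J ≤ C := by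
        rw [← hC]; linarith
      exact_mod_cast this
    -- J is nonempty
    rcases Multiset.empty_or_exists_mem J with rfl | ⟨g, hgJ⟩
    · exact hcon ⟨l, hl, by rw [← hB]; simp⟩
    obtain ⟨J', rfl⟩ := Multiset.exists_cons_of_mem hgJ
    have hgs : g ∈ s := hJ g (by simp)
    have hB' : B + (J'.map ordSeq).sum + ordSeq g = l.sum := by
      rw [← hB, Multiset.map_cons, Multiset.sum_cons]
      abel
    have hcl : Multiset.count g B + addOrderOf g ≤ Multiset.count g l.sum := by
      rw [← hB', Multiset.count_add, Multiset.count_add, ordSeq, Multiset.count_replicate_self]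
      omega
    -- every A is needed
    have key : ∀ A ∈ l, Multiset.count g l.sum < Multiset.count g A + addOrderOf g := by
      intro A hA
      obtain ⟨l', rfl⟩ := Multiset.exists_cons_of_mem hA
      rw [Multiset.sum_cons, Multiset.count_add]
      by_contra hge
      have hge' : addOrderOf g ≤ Multiset.count g l'.sum := by omega
      obtain ⟨B1, hB1⟩ := Multiset.le_iff_exists_add.1 (Multiset.le_count_iff_replicate_le.1 hge')
      change l'.sum = ordSeq g + B1 at hB1
      have hl' : ∀ X ∈ l', IsAtomSeq (s : Set G) X ∧ crossNumber X = 1 :=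
        fun X hX => hl X (by simp [hX])
      rw [Multiset.card_cons] at hC
      obtain ⟨q, hq1, hq2⟩ := ih (Multiset.card l') (by omega) l' {g} B1 rfl hl'
        (by simpa using hgs) (by rw [hB1]; simp [add_comm])
      have hkq : (Multiset.card q : ℚ) + 1 = Multiset.card l' := by
        rw [← k_sum_one q fun X hX => (hq1 X hX).2, ← k_sum_one l' fun X hX => (hl' X hX).2,
          hB1, k_add, k_ordSeq, hq2, add_comm]
      have hkq' : Multiset.card q + 1 = Multiset.card l' := by exact_mod_cast hkq
      refine hcon (ih (Multiset.card q + 1) (by omega) (A ::ₘ q) J' B (by simp) ?_ ?_ ?_)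
      · intro X hX
        rcases Multiset.mem_cons.1 hX with rfl | h
        · exact hl _ (by simp)
        · exact hq1 X h
      · exact fun x hx => hJ x (by simp [hx])
      · rw [Multiset.sum_cons, hB1] at hB'
        rw [Multiset.sum_cons, hq2]
        have : B + (J'.map ordSeq).sum + ordSeq g = (A + B1) + ordSeq g := by
          rw [hB']; abel
        exact add_right_cancel this
    have hpos : ∀ A ∈ l, 1 ≤ Multiset.count g A := fun A hA => by
      have := key A hA
      omega
    have hordn : addOrderOf g ≤ AddMonoid.exponent G :=
      Nat.le_of_dvd exp_pos (AddMonoid.addOrder_dvd_exponent g)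
    rw [Multiset.card_cons] at hC1
    -- pick two members
    have hgW : 1 ≤ Multiset.count g W :=
      Multiset.count_pos.2 (full_support hmin (hm1 W hWm) hWk hgs)
    have hgB : 1 ≤ Multiset.count g B := hgW.trans (Multiset.count_le_of_le g hWB)
    obtain ⟨A, hA⟩ := Multiset.card_pos_iff_exists_mem.1 (show 0 < Multiset.card l by omega)
    have hkA := key A hA
    obtain ⟨l', rfl⟩ := Multiset.exists_cons_of_mem hA
    rw [Multiset.card_cons] at hC
    obtain ⟨A', hA'⟩ := Multiset.card_pos_iff_exists_mem.1 (show 0 < Multiset.card l' by omega)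
    have hkA' := key A' (by simp [hA'])
    obtain ⟨l'', rfl⟩ := Multiset.exists_cons_of_mem hA'
    have hc'' := card_le_count l'' g fun X hX => hpos X (by simp [hX])
    have hpA := hpos A (by simp)
    rw [Multiset.card_cons] at hC
    simp only [Multiset.sum_cons, Multiset.count_add] at hkA hkA' hcl
    omega

/-- Lemma I -/
lemma not_Lam_le {s : Finset G} (hmin : IsMinNonHalfFactorial (s : Set G))
    (hLCN : IsLCNSet (s : Set G))
    (hn : AddMonoid.exponent G ≤ sInf (DeltaSet (s : Set G)) + 2) : ¬ Lam s ≤ LamP s := by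
  intro hL
  obtain ⟨W, hW, hWk⟩ := exists_bad hmin.1
  obtain ⟨J, l, h1, h2, h3⟩ := rep_of_zs hmin hL hW.1
  obtain ⟨l', h4, h5⟩ := good_induction hmin hLCN hL hn _ l J W rfl h2 h1 h3
  obtain ⟨A, hA⟩ : ∃ A, A ∈ l' := by
    apply Multiset.exists_mem_of_ne_zero
    rintro rfl
    exact hW.2.1 (by simpa using h5.symm)
  have hAW : A ≤ W := by rw [← h5]; exact Multiset.le_sum_of_mem hA
  have := atom_eq_of_le hW (h4 A hA).1.1 (h4 A hA).1.2.1 hAW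
  exact hWk (by rw [this]; exact (h4 A hA).2)

end

section
variable {G : Type*} [AddCommGroup G] [Fintype G]

lemma pRank_le_rankG {p : ℕ} (hp : p.Prime) : pRank G p ≤ rankG G := by
  refine le_csSup ⟨Nat.card G, ?_⟩ ⟨p, hp, rfl⟩
  rintro r ⟨q, -, rfl⟩
  refine (Nat.log_le_self _ _).trans ?_
  exact Nat.card_le_card_of_injective (fun x : {x : G // q • x = 0} => (x : G))
    Subtype.val_injective

lemma exists_prime_rank : ∃ p : ℕ, p.Prime ∧ rankG G = pRank G p := by
  have hne : {r : ℕ | ∃ p : ℕ, p.Prime ∧ r = pRank G p}.Nonempty :=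
    ⟨pRank G 2, 2, Nat.prime_two, rfl⟩
  have hb : BddAbove {r : ℕ | ∃ p : ℕ, p.Prime ∧ r = pRank G p} := by
    refine ⟨rankG G, ?_⟩
    rintro r ⟨q, hq, rfl⟩
    exact pRank_le_rankG hq
  exact Nat.sSup_mem hne hb

lemma card_quot_nsmul (H : AddSubgroup G) (p : ℕ) :
    Nat.card (H ⧸ (nsmulAddMonoidHom p : H →+ H).range) ≤ Nat.card {x : G // p • x = 0} := by
  set q : H →+ H := nsmulAddMonoidHom p with hq
  have h1 := AddSubgroup.card_mul_index q.ker
  rw [AddSubgroup.index_ker] at h1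
  have h2 := AddSubgroup.card_mul_index q.range
  have h3 : 0 < Nat.card q.range := Nat.card_pos
  have h4 : q.range.index = Nat.card q.ker := by
    apply Nat.eq_of_mul_eq_mul_left h3
    rw [h2, ← h1, mul_comm]
  change q.range.index ≤ _
  rw [h4]
  refine Nat.card_le_card_of_injective
    (fun x : q.ker => (⟨((x : H) : G), ?_⟩ : {x : G // p • x = 0})) ?_
  · have := x.2
    rw [AddMonoidHom.mem_ker] at this
    have h5 := congrArg (fun y : H => (y : G)) this
    simpa [hq] using h5
  · intro x y hxy
    have := congrArg Subtype.val hxy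
    exact Subtype.ext (Subtype.ext this)

variable [DecidableEq G]

lemma single_mem_Lam {s : Finset G} {h : G} (hs : h ∈ s) :
    (Pi.single h (addOrderOf h : ℤ) : G → ℤ) ∈ Lam s := by
  refine ⟨fun g hg => ?_, ?_⟩
  · rw [Pi.single_eq_of_ne]
    rintro rfl
    exact hg hs
  · rw [Finset.sum_eq_single h]
    · simp [addOrderOf_nsmul_eq_zero]
    · intro b _ hb
      simp [Pi.single_eq_of_ne hb]
    · exact fun h' => absurd hs h'

/-- Lemma II -/
lemma card_le_rank {s : Finset G} (hL : ¬ Lam s ≤ LamP s) : s.card ≤ rankG G + 1 := by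
  -- generators of the coordinate projections
  have hgen : ∀ h : G, ∃ (m : ℤ) (z : G → ℤ), z ∈ Lam s ∧ z h = m ∧ ∀ x ∈ Lam s, m ∣ x h := by
    intro h
    obtain ⟨a, ha⟩ := Int.subgroup_cyclic ((Lam s).map (Pi.evalAddMonoidHom (fun _ : G => ℤ) h))
    have h1 : a ∈ (Lam s).map (Pi.evalAddMonoidHom (fun _ : G => ℤ) h) := by
      rw [ha]; exact AddSubgroup.mem_closure_singleton_self a
    obtain ⟨z, hz, hza⟩ := h1
    refine ⟨a, z, hz, hza, fun x hx => ?_⟩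
    have h2 : x h ∈ (Lam s).map (Pi.evalAddMonoidHom (fun _ : G => ℤ) h) := ⟨x, hx, rfl⟩
    rw [ha, AddSubgroup.mem_closure_singleton] at h2
    obtain ⟨t, ht⟩ := h2
    exact ⟨t, by rw [← ht]; simp [mul_comm]⟩
  choose m z hz hzm hmd using hgen
  have hm0 : ∀ h ∈ s, m h ≠ 0 := by
    intro h hs h0
    have := hmd h _ (single_mem_Lam hs)
    rw [h0, Pi.single_eq_same, zero_dvd_iff] at this
    exact (addOrderOf_pos h).ne' (by exact_mod_cast this)
  have hdec : ∀ x ∈ Lam s, ∀ h ∈ s, ∃ a, x h = m h * a ∧ x - a • z h ∈ LamP s := by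
    intro x hx h hs
    obtain ⟨a, ha⟩ := hmd h x hx
    refine ⟨a, ha, mem_LamP_of_zero ((Lam s).sub_mem hx ((Lam s).zsmul_mem (hz h) a)) hs ?_⟩
    simp [ha, hzm, mul_comm]
  obtain ⟨x0, hx0, hx0'⟩ := SetLike.not_le_iff_exists.1 hL
  have hne : s.Nonempty := by
    rw [Finset.nonempty_iff_ne_empty]
    rintro rfl
    apply hx0'
    have : x0 = 0 := by
      funext g
      exact hx0.1 g (by simp)
    rw [this]
    exact (LamP _).zero_mem
  obtain ⟨h0, hh0⟩ := hne
  set y := z h0 with hy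
  have hyP : y ∉ LamP s := by
    intro hyP
    obtain ⟨a, -, ha⟩ := hdec x0 hx0 h0 hh0
    apply hx0'
    have := (LamP s).add_mem ha ((LamP s).zsmul_mem hyP a)
    simpa [hy] using this
  obtain ⟨p, hp, hpd⟩ : ∃ p : ℕ, p.Prime ∧ ∀ t : ℤ, t • y ∈ LamP s → (p : ℤ) ∣ t := by
    obtain ⟨c, hc⟩ := Int.subgroup_cyclic ((LamP s).comap (zmultiplesHom (G → ℤ) y))
    have hc1 : c.natAbs ≠ 1 := by
      intro h1
      have hcm : c ∈ (LamP s).comap (zmultiplesHom (G → ℤ) y) := by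
        rw [hc]; exact AddSubgroup.mem_closure_singleton_self c
      have hcm' : c • y ∈ LamP s := hcm
      rcases Int.natAbs_eq c with h | h
      · rw [h, h1] at hcm'; exact hyP (by simpa using hcm')
      · rw [h, h1] at hcm'; exact hyP (by simpa using hcm')
    obtain ⟨p, hp, hpc⟩ := Nat.exists_prime_and_dvd hc1
    refine ⟨p, hp, fun t ht => ?_⟩
    have ht' : t ∈ (LamP s).comap (zmultiplesHom (G → ℤ) y) := ht
    rw [hc, AddSubgroup.mem_closure_singleton] at ht'
    obtain ⟨u, rfl⟩ := ht'
    have : (p : ℤ) ∣ c := Int.natCast_dvd.2 hpc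
    simpa using this.mul_left u
  have hpp : Prime (p : ℤ) := Nat.prime_iff_prime_int.1 hp
  have hP : ∀ x ∈ LamP s, ∀ h ∈ s, (p : ℤ) * m h ∣ x h := by
    intro x hx h hs
    obtain ⟨a, ha, ha'⟩ := hdec x (LamP_le s hx) h hs
    obtain ⟨k, -, hk⟩ := hdec (z h) (hz h) h0 hh0
    obtain ⟨b, -, hb⟩ := hdec y (hz h0) h hs
    have h1 : a • z h ∈ LamP s := by
      have := (LamP s).sub_mem hx ha'
      simpa using this
    have h2 : (a * k) • y ∈ LamP s := by
      have := (LamP s).sub_mem h1 ((LamP s).zsmul_mem hk a)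
      rw [smul_sub, sub_sub_cancel, smul_smul] at this
      exact this
    have h3 : (1 - b * k) • y ∈ LamP s := by
      have := (LamP s).add_mem hb ((LamP s).zsmul_mem hk b)
      rw [smul_sub, smul_smul, sub_add_sub_cancel] at this
      rw [sub_smul, one_smul]
      exact this
    have h4 := hpd _ h2
    have h5 := hpd _ h3
    rcases hpp.dvd_or_dvd h4 with h6 | h6
    · rw [ha, mul_comm]
      exact mul_dvd_mul_left _ h6
    · exfalso
      have h7 : (p : ℤ) ∣ 1 := by
        have := dvd_add h5 (h6.mul_left b)
        simpa using this
      exact hpp.not_dvd_one h7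
  -- the group H
  let Φ : (G → ℤ) →+ G :=
    { toFun := fun u => ∑ g ∈ s, (u g * m g) • g
      map_zero' := by simp
      map_add' := by
        intro u v
        simp [add_mul, add_smul, Finset.sum_add_distrib] }
  have hΦ : ∀ u, Φ u = ∑ g ∈ s, (u g * m g) • g := fun u => rfl
  let ext : ({g // g ∈ s.erase h0} → Fin p) → (G → ℤ) := fun v g =>
    if hg : g ∈ s.erase h0 then ((v ⟨g, hg⟩ : ℕ) : ℤ) else 0
  let f : ({g // g ∈ s.erase h0} → Fin p) →
      Φ.range ⧸ (nsmulAddMonoidHom p : Φ.range →+ Φ.range).range :=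
    fun v => QuotientAddGroup.mk ⟨Φ (ext v), ⟨_, rfl⟩⟩
  have hf : Function.Injective f := by
    intro v v' hvv
    have h1 := QuotientAddGroup.eq.1 hvv
    obtain ⟨⟨w, u, hu⟩, hw⟩ := h1
    have h2 : p • w = - Φ (ext v) + Φ (ext v') := by
      have := congrArg (fun y : Φ.range => (y : G)) hw
      simpa using this
    have h3 : Φ (ext v' - ext v - p • u) = 0 := by
      rw [map_sub, map_sub, _root_.map_nsmul, hu, h2]; abel
    set X : G → ℤ := fun g => if g ∈ s then (ext v' g - ext v g - p * u g) * m g else 0 with hX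
    have hXL : X ∈ Lam s := by
      refine ⟨fun g hg => by simp [hX, hg], ?_⟩
      rw [hΦ] at h3
      rw [← h3]
      apply Finset.sum_congr rfl
      intro g hg
      simp [hX, hg]
    obtain ⟨t, ht1, ht2⟩ := hdec X hXL h0 hh0
    have h4 := hP _ ht2 h0 hh0
    have hpt : (p : ℤ) ∣ t := by
      have e0 : X h0 = - p * u h0 * m h0 := by simp [hX, hh0, ext]
      rw [e0] at ht1
      have : -(p : ℤ) * u h0 = t := by
        apply mul_right_cancel₀ (hm0 h0 hh0)
        rw [ht1, mul_comm]
      exact ⟨- u h0, by rw [← this]; ring⟩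
    funext ⟨g, hg⟩
    have hgs : g ∈ s := Finset.mem_of_mem_erase hg
    have h5 := hP _ ht2 g hgs
    have h6 : (p : ℤ) * m g ∣ X g := by
      have h7 : (p : ℤ) * m g ∣ (t • z h0) g := by
        rw [Pi.smul_apply, smul_eq_mul]
        exact mul_dvd_mul hpt (hmd g _ (hz h0))
      have := dvd_add h5 h7
      simpa using this
    have h8 : X g = (((v' ⟨g, hg⟩ : ℕ) : ℤ) - ((v ⟨g, hg⟩ : ℕ) : ℤ) - p * u g) * m g := by
      have hg' := Finset.mem_erase.1 hg
      simp [hX, hgs, ext, hg'.1]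
    rw [h8] at h6
    have h9 := (mul_dvd_mul_iff_right (hm0 g hgs)).1 h6
    have h10 : (p : ℤ) ∣ ((v' ⟨g, hg⟩ : ℕ) : ℤ) - ((v ⟨g, hg⟩ : ℕ) : ℤ) := by
      have := dvd_add h9 (dvd_mul_right (p : ℤ) (u g))
      simpa using this
    have h11 := (Nat.modEq_iff_dvd.2 h10)
    exact Fin.ext (Nat.ModEq.eq_of_lt_of_lt h11 (v ⟨g, hg⟩).2 (v' ⟨g, hg⟩).2)
  have hcard := (Nat.card_le_card_of_injective f hf).trans (card_quot_nsmul Φ.range p)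
  rw [Nat.card_fun, Nat.card_eq_fintype_card, Nat.card_eq_fintype_card, Fintype.card_fin,
    Fintype.card_coe, Finset.card_erase_of_mem hh0] at hcard
  have hlog : s.card - 1 ≤ pRank G p := by
    have hpos : Nat.card {x : G // p • x = 0} ≠ 0 := by
      have : 0 < p ^ (s.card - 1) := pow_pos hp.pos _
      omega
    exact (Nat.le_log_iff_pow_le hp.one_lt hpos).2 hcard
  have := pRank_le_rankG (G := G) hp
  omega

lemma closure_rep {S : Set G} {h : G} (hh : h ∈ AddSubgroup.closure S) :
    ∃ z : G → ℤ, (∀ g, g ∉ S → z g = 0) ∧ ∑ g, z g • g = h := by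
  induction hh using AddSubgroup.closure_induction with
  | mem x hx =>
    refine ⟨Pi.single x 1, fun g hg => ?_, ?_⟩
    · rw [Pi.single_eq_of_ne]
      rintro rfl
      exact hg hx
    · rw [Finset.sum_eq_single x]
      · simp
      · intro b _ hb
        simp [Pi.single_eq_of_ne hb]
      · simp
  | zero => exact ⟨0, by simp, by simp⟩
  | add x y _ _ hx hy =>
    obtain ⟨z, h1, h2⟩ := hx
    obtain ⟨z', h1', h2'⟩ := hy
    exact ⟨z + z', fun g hg => by simp [h1 g hg, h1' g hg],
      by simp [add_smul, Finset.sum_add_distrib, h2, h2']⟩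
  | neg x _ hx =>
    obtain ⟨z, h1, h2⟩ := hx
    exact ⟨-z, fun g hg => by simp [h1 g hg], by simp [h2]⟩

lemma Lam_le_of_mem_closure {s : Finset G} {h h' : G} (hs : h ∈ s) (hs' : h' ∈ s) (hne : h' ≠ h)
    (hh : h ∈ AddSubgroup.closure ((s : Set G) \ {h, h'})) : Lam s ≤ LamP s := by
  obtain ⟨w, hw1, hw2⟩ := closure_rep hh
  have hwh : w h = 0 := hw1 h (by simp)
  have hwh' : w h' = 0 := hw1 h' (by simp)
  set y : G → ℤ := Pi.single h 1 - w with hy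
  have hyL : y ∈ Lam s := by
    have hout : ∀ g, g ∉ s → y g = 0 := by
      intro g hg
      have hgh : g ≠ h := by rintro rfl; exact hg hs
      have : w g = 0 := hw1 g fun hh => hg hh.1
      simp [hy, this, Pi.single_eq_of_ne hgh]
    refine ⟨hout, ?_⟩
    rw [Finset.sum_subset (Finset.subset_univ s) (fun g _ hg => by rw [hout g hg, zero_smul])]
    simp only [hy, Pi.sub_apply, sub_smul, Finset.sum_sub_distrib, hw2]
    rw [Finset.sum_eq_single h]
    · simp
    · intro b _ hb
      simp [Pi.single_eq_of_ne hb]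
    · simp
  have hyP : y ∈ LamP s := mem_LamP_of_zero hyL hs' (by simp [hy, hwh', Pi.single_eq_of_ne hne])
  intro x hx
  have h1 : x - x h • y ∈ LamP s := by
    refine mem_LamP_of_zero ((Lam s).sub_mem hx ((Lam s).zsmul_mem hyL _)) hs ?_
    simp [hy, hwh]
  have := (LamP s).add_mem h1 ((LamP s).zsmul_mem hyP (x h))
  simpa using this

end

section
variable {G : Type*} [AddCommGroup G] [Fintype G]

lemma le_sSup_deltaStar {S : Set G} {U : Multiset G} (hU : IsAtomSeq S U)
    (hk : crossNumber U ≠ 1) (w : G → ℤ) {p q : ℕ} (hp : 0 < p)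
    (hw : ∀ A, IsAtomSeq S A → (p : ℤ) * q ∣ (A.map w).sum - p) : q ≤ sSup (DeltaStar G) := by
  have hne := delta_nonempty hU hk
  have hsum : ∀ l : Multiset (Multiset G), (∀ A ∈ l, IsAtomSeq S A) →
      (p : ℤ) * q ∣ (l.sum.map w).sum - p * Multiset.card l := by
    intro l
    induction l using Multiset.induction_on with
    | empty => simp
    | cons a l ih =>
      intro h
      have h1 := hw a (h a (by simp))
      have h2 := ih fun A hA => h A (by simp [hA])
      have h3 := dvd_add h1 h2
      rw [Multiset.sum_cons, Multiset.map_add, Multiset.sum_add, Multiset.card_cons]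
      push_cast
      have h4 : (a.map w).sum + (l.sum.map w).sum - (p : ℤ) * ((Multiset.card l : ℤ) + 1)
          = ((a.map w).sum - p) + ((l.sum.map w).sum - p * Multiset.card l) := by ring
      rw [h4]
      exact h3
  have hle : q ≤ sInf (DeltaSet S) := by
    have hmem := Nat.sInf_mem hne
    have hpos := delta_pos hmem
    obtain ⟨B, -, -, x, ⟨l, hl, hl1, hl2⟩, y, ⟨l', hl', hl1', hl2'⟩, hxy, hd, -⟩ := hmem
    have h1 := hsum l hl1
    have h2 := hsum l' hl1'
    rw [hl2, hl] at h1
    rw [hl2', hl'] at h2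
    have h3 := dvd_sub h1 h2
    have h4 : (p : ℤ) * q ∣ p * ((y : ℤ) - x) := by
      have h4 : (p : ℤ) * ((y : ℤ) - x)
          = ((B.map w).sum - p * x) - ((B.map w).sum - p * y) := by ring
      rw [h4]
      exact h3
    have hp' : (p : ℤ) ≠ 0 := by exact_mod_cast hp.ne'
    have h5 := (mul_dvd_mul_iff_left hp').1 h4
    have h6 : (q : ℤ) ∣ ((y - x : ℕ) : ℤ) := by
      rw [Nat.cast_sub hxy.le]; exact h5
    rw [hd] at h6
    exact Nat.le_of_dvd hpos (Int.natCast_dvd_natCast.1 h6)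
  refine hle.trans (le_csSup ?_ ⟨S, hne, rfl⟩)
  have hfin : (DeltaStar G).Finite := by
    refine (Set.finite_range fun S : Set G => sInf (DeltaSet S)).subset ?_
    rintro d ⟨S, -, rfl⟩
    exact ⟨S, rfl⟩
  exact hfin.bddAbove

/-- Lemma IVa -/
lemma exp_le : AddMonoid.exponent G ≤ sSup (DeltaStar G) + 2 := by
  classical
  by_cases hn : AddMonoid.exponent G ≤ 2
  · omega
  push Not at hn
  obtain ⟨g, hg⟩ := AddMonoid.exists_addOrderOf_eq_exponent
    (AddMonoid.ExponentExists.of_finite (G := G))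
  set n := AddMonoid.exponent G with hnd
  have hgneg : addOrderOf (-g) = n := by rw [addOrderOf_neg, hg]
  have hg0 : g ≠ 0 := by
    rintro rfl
    simp at hg
    omega
  have hgg : g ≠ -g := by
    intro h
    have h2 : 2 • g = 0 := by
      rw [two_nsmul]
      nth_rewrite 2 [h]
      simp
    have := Nat.le_of_dvd two_pos (addOrderOf_dvd_of_nsmul_eq_zero h2)
    omega
  set S : Set G := {g, -g} with hS
  have hU : IsAtomSeq S ({g, -g} : Multiset G) := by
    refine ⟨⟨?_, by simp⟩, by simp, ?_⟩
    · intro x hx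
      simpa [hS] using hx
    · intro A B hA hB hA0 hB0 h
      have hc := congrArg Multiset.card h
      rw [Multiset.card_add] at hc
      have hAc := Multiset.card_pos.2 hA0
      have hBc := Multiset.card_pos.2 hB0
      have : Multiset.card A = 1 := by
        simp at hc
        omega
      obtain ⟨a, rfl⟩ := Multiset.card_eq_one.1 this
      have ha := hA.2
      have ha' := hA.1 a (by simp)
      rw [Multiset.sum_singleton] at ha
      rw [ha] at ha'
      rcases ha' with h | h
      · exact hg0 h.symm
      · exact hg0 (by simpa using h.symm)
  have hk : crossNumber ({g, -g} : Multiset G) ≠ 1 := by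
    have : crossNumber ({g, -g} : Multiset G) = (n : ℚ)⁻¹ + (n : ℚ)⁻¹ := by
      simp [crossNumber, hg]
    rw [this]
    have hn' : (2 : ℚ) < n := by exact_mod_cast hn
    intro h
    field_simp at h
    linarith
  have := le_sSup_deltaStar hU hk (fun x => if x = g then 1 else (n : ℤ) - 1) (p := n) (q := n - 2)
    (by omega) ?_
  · omega
  intro A hA
  have hcast : ((n - 2 : ℕ) : ℤ) = n - 2 := by
    rw [Nat.cast_sub hn.le]; rfl
  rw [hcast]
  by_cases hboth : g ∈ A ∧ -g ∈ A
  · have hle : ({g, -g} : Multiset G) ≤ A := by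
      rw [Multiset.le_iff_subset]
      · intro x hx
        simp at hx
        rcases hx with rfl | rfl
        · exact hboth.1
        · exact hboth.2
      · simp [hgg]
    rw [atom_eq_of_le hA hU.1 hU.2.1 hle]
    simp [Ne.symm hgg]
  · have hone : ∃ a ∈ S, ∀ x ∈ A, x = a := by
      by_cases h : g ∈ A
      · refine ⟨g, by simp [hS], fun x hx => ?_⟩
        rcases hA.1.1 x hx with rfl | h'
        · rfl
        · exact absurd ⟨h, by rw [Set.mem_singleton_iff.1 h'] at hx; exact hx⟩ hboth
      · refine ⟨-g, by simp [hS], fun x hx => ?_⟩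
        rcases hA.1.1 x hx with rfl | h'
        · exact absurd hx h
        · exact h'
    obtain ⟨a, haS, ha⟩ := hone
    have hord : addOrderOf a = n := by
      rcases haS with rfl | h
      · exact hg
      · rw [Set.mem_singleton_iff.1 h]; exact hgneg
    have hAr : A = Multiset.replicate (Multiset.card A) a := Multiset.eq_replicate_card.2 ha
    have h0 : Multiset.card A • a = 0 := by
      have := hA.1.2
      rw [hAr] at this
      simpa using this
    have hle : ordSeq a ≤ A := by
      rw [hAr]
      exact (Multiset.replicate_le_replicate a).2
        (Nat.le_of_dvd (Multiset.card_pos.2 hA.2.1) (addOrderOf_dvd_of_nsmul_eq_zero h0))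
    rw [atom_eq_of_le hA (zs_ordSeq haS) (ordSeq_ne_zero a) hle, ordSeq, hord,
      Multiset.map_replicate, Multiset.sum_replicate]
    by_cases hag : a = g
    · simp [hag]
    · simp only [hag, if_false]
      refine ⟨1, ?_⟩
      rw [nsmul_eq_mul]
      ring

lemma exists_basis_field {K V : Type*} [Field K] [AddCommGroup V] [Module K V]
    [Finite V] : ∃ b : Fin (Module.finrank K V) → V, LinearIndependent K b ∧
      Nat.card V = Nat.card K ^ Module.finrank K V :=
  ⟨_, (Module.finBasis K V).linearIndependent, Module.natCard_eq_pow_finrank⟩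

lemma exists_basis {p : ℕ} (hp : p.Prime) : ∃ e : Fin (pRank G p) → G, (∀ i, p • e i = 0) ∧
    ∀ x : Fin (pRank G p) → ℕ, ∑ i, x i • e i = 0 → ∀ i, p ∣ x i := by
  haveI : Fact p.Prime := ⟨hp⟩
  let T : AddSubgroup G := (nsmulAddMonoidHom p : G →+ G).ker
  have hT : ∀ x : T, p • x = 0 := by
    intro x
    exact Subtype.ext x.2
  letI : Module (ZMod p) T := AddCommGroup.zmodModule hT
  haveI : Finite T := Subtype.finite
  obtain ⟨b, hb, hbc⟩ := exists_basis_field (K := ZMod p) (V := T)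
  have hcard : Nat.card {x : G // p • x = 0} = p ^ Module.finrank (ZMod p) T := by
    rw [Nat.card_zmod] at hbc
    exact hbc
  have hr : pRank G p = Module.finrank (ZMod p) T := by
    rw [pRank, hcard, Nat.log_pow hp.one_lt]
  rw [hr]
  refine ⟨fun i => (b i : G), fun i => ?_, fun x hx i => ?_⟩
  · have := congrArg (fun y : T => (y : G)) (hT (b i))
    simpa using this
  · have h1 : ∑ i, (x i : ZMod p) • b i = 0 := by
      apply Subtype.ext
      rw [AddSubgroup.val_finsetSum]
      simp only [Nat.cast_smul_eq_nsmul]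
      simpa using hx
    have h2 := Fintype.linearIndependent_iff.1 hb _ h1 i
    exact (ZMod.natCast_eq_zero_iff _ _).1 h2

/-- Lemma IVb -/
lemma rank_le : rankG G ≤ sSup (DeltaStar G) + 1 := by
  classical
  obtain ⟨p, hp, hr⟩ := exists_prime_rank (G := G)
  obtain ⟨e, he1, he2⟩ := exists_basis (G := G) hp
  rw [hr]
  clear hr
  generalize pRank G p = r at e he1 he2 ⊢
  by_cases hr2 : r < 2
  · omega
  push Not at hr2
  have hp1 := hp.one_lt
  -- basic facts
  have hinj : Function.Injective e := by
    intro i j hij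
    by_contra hne
    have := he2 (fun k => if k = i then 1 else if k = j then p - 1 else 0) ?_ i
    · simp at this
      omega
    · have : ∀ k, (if k = i then 1 else if k = j then p - 1 else 0) • e k
          = (if k = i then e i else 0) + (if k = j then (p - 1) • e j else 0) := by
        intro k
        by_cases h1 : k = i
        · subst h1; simp [hne]
        · by_cases h2 : k = j
          · subst h2; simp [Ne.symm hne]
          · simp [h1, h2]
      simp only [this, Finset.sum_add_distrib, Finset.sum_ite_eq', Finset.mem_univ, if_true]
      rw [hij, ← succ_nsmul', Nat.sub_add_cancel hp1.le, he1]
  set e0 : G := ∑ i, e i with he0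
  have he0ne : ∀ i, e i ≠ e0 := by
    intro i hi
    obtain ⟨j, hj⟩ : ∃ j : Fin r, j ≠ i := by
      haveI : Nontrivial (Fin r) := Fin.nontrivial_iff_two_le.2 hr2
      exact exists_ne i
    have := he2 (fun k => if k = i then p else 1) ?_ j
    · simp [hj] at this
      omega
    · have h1 : ∀ k, (if k = i then p else 1) • e k
          = e k + (if k = i then (p - 1) • e i else 0) := by
        intro k
        by_cases h1 : k = i
        · subst h1
          simp only [if_true]
          rw [← succ_nsmul', Nat.sub_add_cancel hp1.le]
        · simp [h1]
      simp only [h1, Finset.sum_add_distrib, Finset.sum_ite_eq', Finset.mem_univ, if_true]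
      rw [← he0, ← hi, ← succ_nsmul', Nat.sub_add_cancel hp1.le, he1]
  have hei0 : ∀ i, e i ≠ 0 := by
    intro i hi
    have := he2 (fun k => if k = i then 1 else 0) (by simp [hi]) i
    simp at this
    omega
  have he00 : e0 ≠ 0 := by
    intro h
    have := he2 (fun _ => 1) (by simpa using h) ⟨0, by omega⟩
    simp at this
    omega
  haveI : Fact p.Prime := ⟨hp⟩
  have hoi : ∀ i, addOrderOf (e i) = p := fun i => addOrderOf_eq_prime (he1 i) (hei0 i)
  have ho0 : addOrderOf e0 = p := by
    refine addOrderOf_eq_prime ?_ he00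
    rw [he0, Finset.smul_sum]
    exact Finset.sum_eq_zero fun i _ => he1 i
  set S : Set G := insert e0 (Set.range e) with hS
  have he0S : e0 ∈ S := by simp [hS]
  have heS : ∀ i, e i ∈ S := fun i => by simp [hS]
  have hoS : ∀ a ∈ S, addOrderOf a = p := by
    rintro a (rfl | ⟨i, rfl⟩)
    · exact ho0
    · exact hoi i
  -- decomposition
  have hcnt : ∀ (a : ℕ) (x : Fin r → ℕ),
      Multiset.count e0 (Multiset.replicate a e0 + ∑ i, Multiset.replicate (x i) (e i)) = a ∧
      ∀ j, Multiset.count (e j) (Multiset.replicate a e0 +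
        ∑ i, Multiset.replicate (x i) (e i)) = x j := by
    intro a x
    constructor
    · rw [Multiset.count_add, Multiset.count_replicate_self, Multiset.count_sum']
      simp [Multiset.count_replicate, he0ne]
    · intro j
      rw [Multiset.count_add, Multiset.count_sum']
      simp [Multiset.count_replicate, Ne.symm (he0ne j), hinj.eq_iff]
  have hdec : ∀ A : Multiset G, (∀ x ∈ A, x ∈ S) →
      A = Multiset.replicate (Multiset.count e0 A) e0 +
        ∑ i, Multiset.replicate (Multiset.count (e i) A) (e i) := by
    intro A hA
    ext g
    by_cases hg : g ∈ S
    · rcases hg with rfl | ⟨j, rfl⟩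
      · exact (hcnt _ _).1.symm
      · exact ((hcnt (Multiset.count e0 A) (fun i => Multiset.count (e i) A)).2 j).symm
    · rw [Multiset.count_eq_zero_of_notMem fun h => hg (hA g h)]
      symm
      apply Multiset.count_eq_zero_of_notMem
      intro h
      rcases Multiset.mem_add.1 h with h | h
      · rw [Multiset.eq_of_mem_replicate h] at hg
        exact hg he0S
      · rw [Multiset.mem_sum] at h
        obtain ⟨i, -, hi⟩ := h
        rw [Multiset.eq_of_mem_replicate hi] at hg
        exact hg (heS i)
  have hdvd : ∀ A, IsZeroSumSeq S A → ∀ i, p ∣ Multiset.count e0 A + Multiset.count (e i) A := by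
    intro A hA
    apply he2
    have h1 := hA.2
    rw [hdec A hA.1, Multiset.sum_add, Multiset.sum_sum] at h1
    simp only [Multiset.sum_replicate] at h1
    rw [he0, Finset.smul_sum, ← Finset.sum_add_distrib] at h1
    simp only [← add_smul] at h1
    exact h1
  have hzero : ∀ A, IsZeroSumSeq S A → Multiset.count e0 A = 0 →
      (∀ i, Multiset.count (e i) A < p) → A = 0 := by
    intro A hA h0 hlt
    rw [hdec A hA.1, h0]
    have : ∀ i, Multiset.count (e i) A = 0 := by
      intro i
      have h1 := hdvd A hA i
      rw [h0, zero_add] at h1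
      exact Nat.eq_zero_of_dvd_of_lt h1 (hlt i)
    simp [this]
  -- the bad atom
  set V : Multiset G := Multiset.replicate 1 e0 + ∑ i, Multiset.replicate (p - 1) (e i) with hV
  obtain ⟨hV0, hVi⟩ := hcnt 1 (fun _ => p - 1)
  have hVatom : IsAtomSeq S V := by
    have hVz : IsZeroSumSeq S V := by
      constructor
      · intro x hx
        rcases Multiset.mem_add.1 hx with h | h
        · rw [Multiset.eq_of_mem_replicate h]; exact he0S
        · rw [Multiset.mem_sum] at h
          obtain ⟨i, -, hi⟩ := h
          rw [Multiset.eq_of_mem_replicate hi]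
          exact heS i
      · rw [hV, Multiset.sum_add, Multiset.sum_sum]
        simp only [Multiset.sum_replicate]
        rw [he0, Finset.smul_sum, ← Finset.sum_add_distrib]
        apply Finset.sum_eq_zero
        intro i _
        rw [← add_smul, Nat.add_sub_cancel' hp1.le, he1]
    refine ⟨hVz, ?_, ?_⟩
    · intro h
      change Multiset.count e0 V = 1 at hV0
      rw [h] at hV0
      simp at hV0
    · intro A B hA hB hA0 hB0 h
      have hc0 : Multiset.count e0 A + Multiset.count e0 B = 1 := by
        rw [← Multiset.count_add, ← h]; exact hV0
      have hci : ∀ i, Multiset.count (e i) A + Multiset.count (e i) B = p - 1 := by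
        intro i
        rw [← Multiset.count_add, ← h]; exact hVi i
      rcases Nat.eq_zero_or_pos (Multiset.count e0 A) with h0 | h0
      · exact hA0 (hzero A hA h0 fun i => by have := hci i; omega)
      · exact hB0 (hzero B hB (by omega) fun i => by have := hci i; omega)
  have hVk : crossNumber V ≠ 1 := by
    have hksum : ∀ x : Fin r → Multiset G, crossNumber (∑ i, x i) = ∑ i, crossNumber (x i) := by
      intro x
      exact map_sum (⟨⟨crossNumber, k_zero⟩, k_add⟩ : Multiset G →+ ℚ) x Finset.univ
    have : crossNumber V = (p : ℚ)⁻¹ + r * ((p - 1 : ℕ) * (p : ℚ)⁻¹) := by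
      rw [hV, k_add, hksum]
      simp [crossNumber, ho0, hoi]
    rw [this, Nat.cast_sub hp1.le]
    have hp' : (1 : ℚ) < p := by exact_mod_cast hp1
    have hr' : (2 : ℚ) ≤ r := by exact_mod_cast hr2
    intro h
    field_simp at h
    push_cast at h
    nlinarith
  have := le_sSup_deltaStar hVatom hVk (fun x => if x = e0 then (r : ℤ) else 1) (p := p)
    (q := r - 1) hp.pos ?_
  · omega
  intro A hA
  have hcast : ((r - 1 : ℕ) : ℤ) = r - 1 := by
    rw [Nat.cast_sub (by omega)]; rfl
  rw [hcast]
  by_cases hbig : ∃ a ∈ S, p ≤ Multiset.count a A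
  · obtain ⟨a, haS, ha⟩ := hbig
    rw [← hoS a haS] at ha
    have hle : ordSeq a ≤ A := Multiset.le_count_iff_replicate_le.1 ha
    rw [atom_eq_of_le hA (zs_ordSeq haS) (ordSeq_ne_zero a) hle, ordSeq, hoS a haS,
      Multiset.map_replicate, Multiset.sum_replicate, nsmul_eq_mul]
    split_ifs
    · exact ⟨1, by ring⟩
    · simp
  · push Not at hbig
    have h0 := hbig e0 he0S
    have hi := fun i => hbig (e i) (heS i)
    have hpos : 0 < Multiset.count e0 A := by
      by_contra h
      exact hA.2.1 (hzero A hA.1 (by omega) hi)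
    have heq : ∀ i, Multiset.count (e i) A = p - Multiset.count e0 A := by
      intro i
      obtain ⟨t, ht⟩ := hdvd A hA.1 i
      have h1 := hi i
      have : t = 1 := by
        have ht0 : 0 < t := by
          by_contra h
          have : t = 0 := by omega
          rw [this] at ht
          omega
        have ht2 : t < 2 := by
          by_contra h
          have : p * 2 ≤ p * t := Nat.mul_le_mul_left p (by omega)
          omega
        omega
      rw [this] at ht
      omega
    rw [hdec A hA.1.1]
    have hmsum : ∀ (w : G → ℤ) (x : Fin r → Multiset G),
        ((∑ i, x i).map w).sum = ∑ i, ((x i).map w).sum := by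
      intro w x
      exact map_sum ((Multiset.sumAddMonoidHom (M := ℤ)).comp (Multiset.mapAddMonoidHom w)) x
        Finset.univ
    rw [Multiset.map_add, Multiset.sum_add, hmsum]
    simp only [Multiset.map_replicate, Multiset.sum_replicate, heq, he0ne, if_true, if_false,
      Finset.sum_const, Finset.card_univ, Fintype.card_fin, nsmul_eq_mul]
    rw [Nat.cast_sub h0.le]
    exact ⟨1, by ring⟩

end

end Aux

theorem stmt_11 {G : Type*} [AddCommGroup G] [Fintype G] (G₀ : Set G)
    (hmin : IsMinNonHalfFactorial G₀) (hLCN : IsLCNSet G₀)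
    (hmax : sInf (DeltaSet G₀) = sSup (DeltaStar G)) :
    G₀.ncard = rankG G + 1 ∧ AddMonoid.exponent G - 1 ≤ rankG G ∧
    ∀ h ∈ G₀, ∀ h' ∈ G₀ \ {h}, h ∉ AddSubgroup.closure (G₀ \ {h, h'}) := by
  classical
  obtain ⟨s, rfl⟩ : ∃ s : Finset G, (s : Set G) = G₀ := ⟨G₀.toFinset, by simp⟩
  have h1 := Aux.exp_le (G := G)
  have h2 := Aux.rank_le (G := G)
  have h3 := Aux.delta_add_two_le s hmin hLCN
  rw [← hmax] at h1 h2
  have h4 := Aux.not_Lam_le hmin hLCN h1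
  have h5 := Aux.card_le_rank h4
  rw [Set.ncard_coe_finset]
  refine ⟨by omega, by omega, fun h hh h' hh' hcl => h4 ?_⟩
  exact Aux.Lam_le_of_mem_closure hh hh'.1 hh'.2 hcl
end

section
/- Let G be a finite abelian group with exp(G) = n ≥ 5 and r(G) ≤ n − 3. Then every non-half-factorial LCN-set G₀ ⊆ G satisfies min Δ(G₀) ≤ n − 4 (i.e. m(G) ≤ n − 4). -/
open Multiset

section Helpers

variable {G : Type*} [AddCommGroup G]

lemma crossNumber_add (A B : Multiset G) :
    crossNumber (A + B) = crossNumber A + crossNumber B := by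
  simp [crossNumber]

lemma crossNumber_zero : crossNumber (0 : Multiset G) = 0 := by
  simp [crossNumber]

lemma crossNumber_sum (l : Multiset (Multiset G)) :
    crossNumber l.sum = (l.map crossNumber).sum := by
  induction l using Multiset.induction_on with
  | empty => simp [crossNumber_zero]
  | cons a l ih => simp [crossNumber_add, ih]

lemma crossNumber_replicate [Finite G] (g : G) :
    crossNumber (Multiset.replicate (addOrderOf g) g) = 1 := by
  have : (addOrderOf g : ℚ) ≠ 0 := by
    exact_mod_cast (addOrderOf_pos g).ne'
  simp [crossNumber, this]

lemma isZeroSumSeq_add {S : Set G} {A B : Multiset G} (hA : IsZeroSumSeq S A)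
    (hB : IsZeroSumSeq S B) : IsZeroSumSeq S (A + B) := by
  refine ⟨fun x hx => ?_, by simp [hA.2, hB.2]⟩
  rcases Multiset.mem_add.1 hx with h | h
  · exact hA.1 x h
  · exact hB.1 x h

lemma isZeroSumSeq_zero (S : Set G) : IsZeroSumSeq S (0 : Multiset G) := by
  simp [IsZeroSumSeq]

lemma isZeroSumSeq_sum {S : Set G} (l : Multiset (Multiset G))
    (h : ∀ A ∈ l, IsZeroSumSeq S A) : IsZeroSumSeq S l.sum := by
  induction l using Multiset.induction_on with
  | empty => simpa using isZeroSumSeq_zero S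
  | cons a l ih =>
    rw [Multiset.sum_cons]
    exact isZeroSumSeq_add (h a (by simp)) (ih fun A hA => h A (by simp [hA]))

/-- An atom over a subset is an atom over the larger set. -/
lemma isAtomSeq_mono {S T : Set G} (h : S ⊆ T) {A : Multiset G} (hA : IsAtomSeq S A) :
    IsAtomSeq T A := by
  refine ⟨⟨fun x hx => h (hA.1.1 x hx), hA.1.2⟩, hA.2.1, fun B C hB hC hB0 hC0 he => ?_⟩
  refine hA.2.2 B C ⟨fun x hx => hA.1.1 x ?_, hB.2⟩ ⟨fun x hx => hA.1.1 x ?_, hC.2⟩ hB0 hC0 he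
  · simp [he, hx]
  · simp [he, hx]

lemma isAtomSeq_restrict {S T : Set G} {A : Multiset G} (hA : IsAtomSeq T A)
    (h : S ⊆ T) (hS : ∀ x ∈ A, x ∈ S) : IsAtomSeq S A := by
  refine ⟨⟨hS, hA.1.2⟩, hA.2.1, fun B C hB hC hB0 hC0 he => ?_⟩
  exact hA.2.2 B C ⟨fun x hx => h (hB.1 x hx), hB.2⟩ ⟨fun x hx => h (hC.1 x hx), hC.2⟩ hB0 hC0 he

/-- Every zero-sum sequence has a factorization. -/
lemma exists_factorization (S : Set G) : ∀ (m : ℕ) (B : Multiset G), Multiset.card B ≤ m →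
    IsZeroSumSeq S B →
    ∃ z : Multiset (Multiset G), (∀ A ∈ z, IsAtomSeq S A) ∧ z.sum = B := by
  intro m
  induction m with
  | zero =>
    intro B hB _
    have : B = 0 := by simpa using hB
    exact ⟨0, by simp, by simp [this]⟩
  | succ m ih =>
    intro B hB hZ
    by_cases h0 : B = 0
    · exact ⟨0, by simp, by simp [h0]⟩
    by_cases hat : IsAtomSeq S B
    · exact ⟨{B}, by simpa using hat, by simp⟩
    · simp only [IsAtomSeq, not_and, not_forall] at hat
      obtain ⟨A, C, hA, hC, hA0, hC0, he⟩ := hat hZ h0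
      have he : B = A + C := not_not.1 he
      have h1 := Multiset.card_pos.2 hA0
      have h2 := Multiset.card_pos.2 hC0
      have h3 : Multiset.card B = Multiset.card A + Multiset.card C := by simp [he]
      obtain ⟨z1, hz1, e1⟩ := ih A (by omega) hA
      obtain ⟨z2, hz2, e2⟩ := ih C (by omega) hC
      refine ⟨z1 + z2, fun X hX => ?_, by simp [e1, e2, he]⟩
      rcases Multiset.mem_add.1 hX with h | h
      · exact hz1 X h
      · exact hz2 X h

lemma isAtomSeq_replicate [Finite G] {S : Set G} {g : G} (hg : g ∈ S) :
    IsAtomSeq S (Multiset.replicate (addOrderOf g) g) := by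
  have hpos := addOrderOf_pos g
  refine ⟨⟨fun x hx => (Multiset.eq_of_mem_replicate hx) ▸ hg, by simp [addOrderOf_nsmul_eq_zero]⟩,
    ?_, ?_⟩
  · intro h
    have := congrArg Multiset.card h
    rw [Multiset.card_replicate, Multiset.card_zero] at this
    omega
  · intro A B hA hB hA0 hB0 he
    have key : ∀ C : Multiset G, C ≤ Multiset.replicate (addOrderOf g) g → C.sum = 0 → C ≠ 0 →
        addOrderOf g ≤ Multiset.card C := by
      intro C hC hs h0
      have hC' : C = Multiset.replicate (Multiset.card C) g :=
        Multiset.eq_replicate_card.2 fun b hb =>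
          Multiset.eq_of_mem_replicate (Multiset.mem_of_le hC hb)
      rw [hC', Multiset.sum_replicate] at hs
      exact Nat.le_of_dvd (Multiset.card_pos.2 h0) (addOrderOf_dvd_of_nsmul_eq_zero hs)
    have h1 := key A (he ▸ Multiset.le_add_right A B) hA.2 hA0
    have h2 := key B (he ▸ Multiset.le_add_left B A) hB.2 hB0
    have h3 := congrArg Multiset.card he
    simp at h3
    omega

/-- Two different lengths give a small distance. -/
lemma exists_delta_le {S : Set G} {B : Multiset G} (hB : IsZeroSumSeq S B) (hB0 : B ≠ 0)
    {a b : ℕ} (ha : a ∈ LengthSet S B) (hb : b ∈ LengthSet S B) (hab : a < b) :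
    sInf (DeltaSet S) ≤ b - a := by
  classical
  have hex : ∃ y, y ∈ LengthSet S B ∧ a < y := ⟨b, hb, hab⟩
  have h1 := Nat.find_spec hex
  have h2 : Nat.find hex ≤ b := Nat.find_min' hex ⟨hb, hab⟩
  have h3 : Nat.find hex - a ∈ DeltaSet S :=
    ⟨B, hB, hB0, a, ha, Nat.find hex, h1.1, h1.2, rfl,
      fun z hz hz' => Nat.find_min hex hz'.2 ⟨hz, hz'.1⟩⟩
  exact (Nat.sInf_le h3).trans (by omega)

/-- Sequences with a factorization into atoms of cross number one. -/
def GoodSeq (S : Set G) (B : Multiset G) : Prop :=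
  ∃ z : Multiset (Multiset G), (∀ A ∈ z, IsAtomSeq S A ∧ crossNumber A = 1) ∧ z.sum = B

lemma goodSeq_zero (S : Set G) : GoodSeq S 0 := ⟨0, by simp, by simp⟩

lemma goodSeq_add {S : Set G} {A B : Multiset G} (hA : GoodSeq S A) (hB : GoodSeq S B) :
    GoodSeq S (A + B) := by
  obtain ⟨z1, h1, e1⟩ := hA
  obtain ⟨z2, h2, e2⟩ := hB
  refine ⟨z1 + z2, fun X hX => ?_, by simp [e1, e2]⟩
  rcases Multiset.mem_add.1 hX with h | h
  · exact h1 X h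
  · exact h2 X h

lemma goodSeq_nsmul {S : Set G} {A : Multiset G} (hA : GoodSeq S A) (m : ℕ) :
    GoodSeq S (m • A) := by
  induction m with
  | zero => simpa using goodSeq_zero S
  | succ m ih => rw [succ_nsmul]; exact goodSeq_add ih hA

lemma GoodSeq.isZeroSumSeq {S : Set G} {A : Multiset G} (hA : GoodSeq S A) :
    IsZeroSumSeq S A := by
  obtain ⟨z, h, e⟩ := hA
  rw [← e]
  exact isZeroSumSeq_sum z fun A hA => (h A hA).1.1

lemma sum_ge_of_ge (z : Multiset (Multiset G)) (h : ∀ A ∈ z, 1 ≤ crossNumber A) :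
    (Multiset.card z : ℚ) ≤ (z.map crossNumber).sum := by
  induction z using Multiset.induction_on with
  | empty => simp
  | cons a l ih =>
    have := ih fun A hA => h A (by simp [hA])
    have h' := h a (by simp)
    simp only [Multiset.card_cons, Multiset.map_cons, Multiset.sum_cons]
    push_cast
    linarith

lemma sum_eq_of_eq (z : Multiset (Multiset G)) (h : ∀ A ∈ z, crossNumber A = 1) :
    (z.map crossNumber).sum = (Multiset.card z : ℚ) := by
  rw [Multiset.map_congr rfl h]
  simp

/-- First bound: `min Δ ≤ |S| - 2`. -/
lemma bound_card [Finite G] [DecidableEq G] (S : Finset G)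
    (H1 : ∀ U, IsAtomSeq (S : Set G) U → 1 ≤ crossNumber U)
    (W : Multiset G) (hW : IsAtomSeq (S : Set G) W) (hk : 1 < crossNumber W)
    (hfull : ∀ s ∈ S, s ∈ W) :
    ∃ B : Multiset G, IsZeroSumSeq (S : Set G) B ∧ B ≠ 0 ∧ ∃ a ∈ LengthSet (S : Set G) B,
      ∃ b ∈ LengthSet (S : Set G) B, a < b ∧ b - a ≤ S.card - 2 := by
  set X : Multiset G := (S.val.map fun s => Multiset.replicate (addOrderOf s) s).sum with hX
  have hXat : ∀ A ∈ S.val.map fun s => Multiset.replicate (addOrderOf s) s,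
      IsAtomSeq (S : Set G) A := by
    intro A hA
    obtain ⟨s, hs, rfl⟩ := Multiset.mem_map.1 hA
    exact isAtomSeq_replicate (by simpa using hs)
  have hlt : ∀ s ∈ S, W.count s < addOrderOf s := by
    intro s hs
    by_contra hcon
    push Not at hcon
    obtain ⟨C, hC⟩ := Multiset.le_iff_exists_add.1 (Multiset.le_count_iff_replicate_le.1 hcon)
    have hR := isAtomSeq_replicate (S := (S : Set G)) (g := s) (by simpa using hs)
    by_cases hC0 : C = 0
    · rw [hC, hC0, add_zero, crossNumber_replicate] at hk
      exact lt_irrefl _ hk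
    · refine hW.2.2 _ C hR.1 ⟨fun x hx => hW.1.1 x (by rw [hC]; simp [hx]), ?_⟩ hR.2.1 hC0 hC
      have := hW.1.2
      rw [hC, Multiset.sum_add, hR.1.2, zero_add] at this
      exact this
  have hcount : ∀ s ∈ S, X.count s = addOrderOf s := by
    intro s hs
    rw [hX]
    change Multiset.count s (∑ s ∈ S, Multiset.replicate (addOrderOf s) s) = _
    rw [Multiset.count_sum']
    simp [Multiset.count_replicate, hs]
  have hWX : W ≤ X := by
    rw [Multiset.le_iff_count]
    intro a
    by_cases ha : a ∈ W
    · have : a ∈ S := by simpa using hW.1.1 a ha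
      rw [hcount a this]; exact (hlt a this).le
    · simp [Multiset.count_eq_zero_of_notMem ha]
  obtain ⟨V, hV⟩ := Multiset.le_iff_exists_add.1 hWX
  have hXz : IsZeroSumSeq (S : Set G) X := isZeroSumSeq_sum _ fun A hA => (hXat A hA).1
  have hX0 : X ≠ 0 := by
    intro h
    rw [h] at hWX
    exact hW.2.1 (by simpa using hWX)
  have hVz : IsZeroSumSeq (S : Set G) V := by
    refine ⟨fun x hx => hXz.1 x (by rw [hV]; simp [hx]), ?_⟩
    have := hXz.2
    rw [hV, Multiset.sum_add, hW.1.2, zero_add] at this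
    exact this
  have hV0 : V ≠ 0 := by
    rintro rfl
    obtain ⟨a, ha⟩ := Multiset.exists_mem_of_ne_zero hW.2.1
    have haS : a ∈ S := by simpa using hW.1.1 a ha
    have := hlt a haS
    rw [← hcount a haS, hV] at this
    simp at this
  obtain ⟨z, hz, ez⟩ := exists_factorization (S : Set G) _ V le_rfl hVz
  have hz0 : 1 ≤ Multiset.card z := by
    refine Multiset.card_pos.2 ?_
    rintro rfl
    exact hV0 (by simpa using ez.symm)
  have hkX : crossNumber X = S.card := by
    rw [hX, crossNumber_sum, sum_eq_of_eq]
    · simp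
    · intro A hA
      obtain ⟨s, hs, rfl⟩ := Multiset.mem_map.1 hA
      exact crossNumber_replicate s
  have hkz := sum_ge_of_ge z fun A hA => H1 A (hz A hA)
  rw [← crossNumber_sum, ez] at hkz
  rw [hV, crossNumber_add] at hkX
  have hfin : ((Multiset.card z + 1 : ℕ) : ℚ) < (S.card : ℕ) := by
    push_cast
    linarith
  have hfin' : Multiset.card z + 1 < S.card := by exact_mod_cast hfin
  refine ⟨X, hXz, hX0, Multiset.card z + 1, ⟨W ::ₘ z, by simp, ?_, by simp [ez, hV]⟩, S.card,
    ⟨_, by simp, hXat, rfl⟩, hfin', by omega⟩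
  intro A hA
  rcases Multiset.mem_cons.1 hA with rfl | h
  · exact hW
  · exact hz A h

/-- Second bound: if some non-good sequence becomes good after adding `h ^ ord h`. -/
lemma bound_exp [Finite G] [DecidableEq G] (S : Set G) (n : ℕ) (hn : 5 ≤ n)
    (H1 : ∀ U, IsAtomSeq S U → 1 ≤ crossNumber U)
    (H3 : ∀ U, IsAtomSeq S U → crossNumber U ≠ 1 → ∀ s ∈ S, s ∈ U)
    (h : G) (hh : h ∈ S) (hord : addOrderOf h ≤ n) (Y : Multiset G)
    (hY : ¬ GoodSeq S Y)
    (hg : GoodSeq S (Y + Multiset.replicate (addOrderOf h) h)) :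
    ∃ B : Multiset G, IsZeroSumSeq S B ∧ B ≠ 0 ∧ ∃ a ∈ LengthSet S B,
      ∃ b ∈ LengthSet S B, a < b ∧ b - a ≤ n - 4 := by
  classical
  obtain ⟨l, hl, el⟩ := hg
  have hex : ∃ t : ℕ, ∃ I ≤ l, addOrderOf h ≤ I.sum.count h ∧ Multiset.card I = t :=
    ⟨_, l, le_rfl, by rw [el]; simp, rfl⟩
  obtain ⟨I, hIl, hIc, hIt⟩ := Nat.find_spec hex
  have hmin : ∀ A ∈ I, (I.erase A).sum.count h < addOrderOf h := by
    intro A hA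
    by_contra hcon
    push Not at hcon
    have hlt : Multiset.card (I.erase A) < Nat.find hex := by
      rw [← hIt]; exact Multiset.card_erase_lt_of_mem hA
    exact Nat.find_min hex hlt ⟨_, (Multiset.erase_le A I).trans hIl, hcon, rfl⟩
  obtain ⟨J, hJ⟩ := Multiset.le_iff_exists_add.1 hIl
  obtain ⟨R, hR⟩ := Multiset.le_iff_exists_add.1 (Multiset.le_count_iff_replicate_le.1 hIc)
  have hI : ∀ A ∈ I, IsAtomSeq S A ∧ crossNumber A = 1 := fun A hA =>
    hl A (Multiset.mem_of_le hIl hA)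
  have hJg : GoodSeq S J.sum := ⟨J, fun A hA => hl A (by rw [hJ]; simp [hA]), rfl⟩
  have hYR : Y = R + J.sum := by
    rw [hJ, Multiset.sum_add, hR, add_assoc, add_comm] at el
    exact (add_right_cancel el).symm
  have hRbad : ¬ GoodSeq S R := fun hc => hY (hYR ▸ goodSeq_add hc hJg)
  have hrep := isAtomSeq_replicate (S := S) hh
  have hIz : IsZeroSumSeq S I.sum := isZeroSumSeq_sum _ fun A hA => (hI A hA).1.1
  have hRz : IsZeroSumSeq S R := by
    refine ⟨fun x hx => hIz.1 x (by rw [hR]; simp [hx]), ?_⟩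
    have := hIz.2
    rw [hR, Multiset.sum_add, hrep.1.2, zero_add] at this
    exact this
  obtain ⟨z, hz, ez⟩ := exists_factorization S _ R le_rfl hRz
  obtain ⟨A, hAz, hA1⟩ : ∃ A ∈ z, crossNumber A ≠ 1 := by
    by_contra hcon
    push Not at hcon
    exact hRbad ⟨z, fun A hA => ⟨hz A hA, hcon A hA⟩, ez⟩
  obtain ⟨z', hz'⟩ := Multiset.exists_cons_of_mem hAz
  have hhA := H3 A (hz A hAz) hA1 h hh
  have hhR : 1 ≤ R.count h := by
    rw [Multiset.one_le_count_iff_mem, ← ez, hz']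
    simp [hhA]
  have hcI : I.sum.count h = addOrderOf h + R.count h := by
    rw [hR]; simp
  have herase : ∀ A ∈ I, I.sum.count h = A.count h + (I.erase A).sum.count h := by
    intro A hA
    conv_lhs => rw [← Multiset.cons_erase hA]
    simp
  have htwo : ∀ A ∈ I, 2 ≤ A.count h := by
    intro A hA
    have h1 := hmin A hA
    have h2 := herase A hA
    omega
  have hgen : ∀ K : Multiset (Multiset G), (∀ A ∈ K, 2 ≤ A.count h) →
      2 * Multiset.card K ≤ K.sum.count h := by
    intro K
    induction K using Multiset.induction_on with
    | empty => simp
    | cons a K ih =>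
      intro hK
      have h1 := ih fun A hA => hK A (by simp [hA])
      have h2 := hK a (by simp)
      simp only [Multiset.card_cons, Multiset.sum_cons, Multiset.count_add]
      omega
  have hI0 : I ≠ 0 := by
    rintro rfl
    have := addOrderOf_pos h
    rw [Multiset.sum_zero, Multiset.count_zero] at hIc
    omega
  obtain ⟨A0, hA0⟩ := Multiset.exists_mem_of_ne_zero hI0
  have h1 := hgen (I.erase A0) fun A hA => htwo A (Multiset.mem_of_mem_erase hA)
  have h2 := hmin A0 hA0
  have h3 := Multiset.card_erase_add_one hA0
  have hk1 : crossNumber I.sum = Multiset.card I := by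
    rw [crossNumber_sum, sum_eq_of_eq _ fun A hA => (hI A hA).2]
  rw [hR, crossNumber_add, crossNumber_replicate, ← ez, crossNumber_sum, hz'] at hk1
  have hk2 := sum_ge_of_ge z' fun A hA => H1 A (hz A (by rw [hz']; simp [hA]))
  have hk3 : 1 < crossNumber A := lt_of_le_of_ne (H1 A (hz A hAz)) (Ne.symm hA1)
  have hcz : Multiset.card z = Multiset.card z' + 1 := by rw [hz']; simp
  have hfin : ((Multiset.card z + 1 : ℕ) : ℚ) < (Multiset.card I : ℕ) := by
    rw [hcz]
    push_cast
    simp only [Multiset.map_cons, Multiset.sum_cons] at hk1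
    linarith
  have hfin' : Multiset.card z + 1 < Multiset.card I := by exact_mod_cast hfin
  refine ⟨I.sum, hIz, ?_, Multiset.card z + 1,
    ⟨Multiset.replicate (addOrderOf h) h ::ₘ z, by simp, ?_, by simp [ez, hR]⟩, Multiset.card I,
    ⟨I, rfl, fun A hA => (hI A hA).1, rfl⟩, hfin', by omega⟩
  · intro h0
    rw [h0] at hcI
    simp at hcI
    omega
  · intro A hA
    rcases Multiset.mem_cons.1 hA with rfl | hA
    · exact hrep
    · exact hz A hA

/-- Adding blocks one at a time. -/
lemma exists_step (S : Set G) (bl : Multiset G) : ∀ Y : Multiset G, (∀ s ∈ bl, s ∈ S) →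
    ¬ GoodSeq S Y →
    GoodSeq S (Y + (bl.map fun s => Multiset.replicate (addOrderOf s) s).sum) →
    ∃ h ∈ S, ∃ Y', ¬ GoodSeq S Y' ∧
      GoodSeq S (Y' + Multiset.replicate (addOrderOf h) h) := by
  induction bl using Multiset.induction_on with
  | empty =>
    intro Y _ hY hg
    simp at hg
    exact absurd hg hY
  | cons a bl ih =>
    intro Y hS hY hg
    by_cases hc : GoodSeq S (Y + Multiset.replicate (addOrderOf a) a)
    · exact ⟨a, hS a (by simp), Y, hY, hc⟩
    · refine ih _ (fun s hs => hS s (by simp [hs])) hc ?_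
      rw [add_assoc]
      simpa using hg

/-- A relation among many elements with a coefficient prime to `p`. -/
lemma exists_relation [Finite G] (T : Finset G) (p : ℕ) (hp : p.Prime)
    (hT : pRank G p < T.card) :
    ∃ z : G → ℤ, (∀ g, g ∉ T → z g = 0) ∧ ∑ t ∈ T, z t • t = 0 ∧
      ∃ h ∈ T, ¬ (p : ℤ) ∣ z h := by
  classical
  let f : (T → ℤ) →+ G :=
    { toFun := fun x => ∑ t : T, x t • (t : G)
      map_zero' := by simp
      map_add' := by intro x y; simp [add_smul, Finset.sum_add_distrib] }
  let H := f.range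
  let m : H →+ H := nsmulAddMonoidHom p
  have hcard : Nat.card (H ⧸ m.range) < p ^ T.card := by
    have e1 : Nat.card (H ⧸ m.range) = Nat.card m.ker := by
      have h1 := m.range.card_mul_index
      have h2 := m.ker.card_mul_index
      rw [AddSubgroup.index_ker] at h2
      rw [← AddSubgroup.index_eq_card]
      have h3 : 0 < Nat.card m.range := Nat.card_pos
      refine Nat.eq_of_mul_eq_mul_left h3 ?_
      rw [h1, ← h2, mul_comm]
    have e2 : Nat.card m.ker ≤ Nat.card {x : G // p • x = 0} := by
      refine Nat.card_le_card_of_injective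
        (fun x : m.ker => (⟨((x : H) : G), ?_⟩ : {x : G // p • x = 0})) ?_
      · have hx : m (x : H) = 0 := x.2
        have := congrArg (Subtype.val) hx
        simpa [m] using this
      · intro x y hxy
        simp only [Subtype.mk.injEq] at hxy
        exact Subtype.ext (Subtype.ext hxy)
    have e3 : Nat.card {x : G // p • x = 0} < p ^ T.card :=
      Nat.lt_pow_of_log_lt hp.one_lt hT
    omega
  let φ : (T → Fin p) → H ⧸ m.range := fun c =>
    QuotientAddGroup.mk (⟨f fun t => ((c t : ℕ) : ℤ), ⟨_, rfl⟩⟩ : H)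
  have hninj : ¬ Function.Injective φ := by
    intro hinj
    have := Nat.card_le_card_of_injective φ hinj
    simp at this
    omega
  simp only [Function.Injective, not_forall] at hninj
  obtain ⟨c, c', hφ, hne⟩ := hninj
  obtain ⟨h, hh⟩ := Function.ne_iff.1 hne
  have hmem := QuotientAddGroup.eq.1 hφ
  obtain ⟨⟨y, ⟨x, rfl⟩⟩, hx⟩ := hmem
  have hx' := congrArg (Subtype.val) hx
  have hx2 : f (fun t => ((c' t : ℕ) : ℤ) - ((c t : ℕ) : ℤ) - p * x t) = 0 := by
    have hsplit : (fun t => ((c' t : ℕ) : ℤ) - ((c t : ℕ) : ℤ) - p * x t)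
        = (fun t => ((c' t : ℕ) : ℤ)) - (fun t => ((c t : ℕ) : ℤ)) - p • x := by
      funext t; simp
    rw [hsplit, _root_.map_sub, _root_.map_sub, _root_.map_nsmul]
    have hx3 : p • f x = -(f fun t => ((c t : ℕ) : ℤ)) + f fun t => ((c' t : ℕ) : ℤ) := by
      simpa [m] using hx'
    rw [hx3]; abel
  refine ⟨fun g => if hg : g ∈ T then
    ((c' ⟨g, hg⟩ : ℕ) : ℤ) - ((c ⟨g, hg⟩ : ℕ) : ℤ) - p * x ⟨g, hg⟩ else 0, ?_, ?_, h, h.2, ?_⟩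
  · intro g hg
    simp [hg]
  · rw [← Finset.sum_coe_sort]
    rw [← hx2]
    refine Finset.sum_congr rfl fun t _ => ?_
    simp
  · simp only [h.2, dif_pos]
    intro hd
    have hd2 : (p : ℤ) ∣ ((c' h : ℕ) : ℤ) - ((c h : ℕ) : ℤ) := by
      have := dvd_add hd (dvd_mul_right (p : ℤ) (x h))
      simpa using this
    apply hh
    have hb1 := (c h).2
    have hb2 := (c' h).2
    have := Int.eq_zero_of_abs_lt_dvd hd2 (by rw [abs_lt]; constructor <;> omega)
    exact Fin.ext (by omega)

/-- Vectors congruent modulo `n` to a good sequence. -/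
def goodLattice [DecidableEq G] (S : Set G) (n : ℕ) (hn : 1 ≤ n) : AddSubgroup (G → ℤ) where
  carrier := {x | ∃ B, GoodSeq S B ∧ ∀ a, (n : ℤ) ∣ (B.count a : ℤ) - x a}
  zero_mem' := ⟨0, goodSeq_zero S, by simp⟩
  add_mem' := by
    rintro x y ⟨B, hB, hx⟩ ⟨C, hC, hy⟩
    refine ⟨B + C, goodSeq_add hB hC, fun a => ?_⟩
    obtain ⟨k, hk⟩ := hx a
    obtain ⟨j, hj⟩ := hy a
    refine ⟨k + j, ?_⟩
    rw [Multiset.count_add, Pi.add_apply]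
    push_cast
    linarith
  neg_mem' := by
    rintro x ⟨B, hB, hx⟩
    refine ⟨(n - 1) • B, goodSeq_nsmul hB _, fun a => ?_⟩
    obtain ⟨k, hk⟩ := hx a
    refine ⟨B.count a - k, ?_⟩
    rw [Multiset.count_nsmul, Pi.neg_apply]
    push_cast [Nat.cast_sub hn]
    linarith

/-- A proper-support relation lies in the good lattice. -/
lemma relation_mem [Finite G] [DecidableEq G] (S : Finset G) (n : ℕ) (hn : 1 ≤ n)
    (hexp : ∀ g : G, n • g = 0)
    (H3 : ∀ U, IsAtomSeq (S : Set G) U → crossNumber U ≠ 1 → ∀ s ∈ S, s ∈ U)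
    (x : G → ℤ) (hx : ∀ g, g ∉ S → x g = 0) (hrel : ∑ s ∈ S, x s • s = 0)
    (h : G) (hh : h ∈ S) (hx0 : x h = 0) : x ∈ goodLattice (S : Set G) n hn := by
  have hn0 : (n : ℤ) ≠ 0 := by omega
  set B : Multiset G := ∑ s ∈ S, Multiset.replicate (x s % n).toNat s with hB
  have hcount : ∀ a, B.count a = (x a % n).toNat := by
    intro a
    rw [hB, Multiset.count_sum']
    simp only [Multiset.count_replicate]
    by_cases ha : a ∈ S
    · simp [ha]
    · simp [ha, hx a ha]
  have hmemS : ∀ a ∈ B, a ∈ S := by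
    intro a ha
    by_contra hc
    have h1 := Multiset.count_pos.2 ha
    rw [hcount, hx a hc] at h1
    simp at h1
  have hhB : h ∉ B := by
    intro ha
    have h1 := Multiset.count_pos.2 ha
    rw [hcount, hx0] at h1
    simp at h1
  have hsum : B.sum = 0 := by
    rw [hB, Multiset.sum_sum, ← hrel]
    refine Finset.sum_congr rfl fun s _ => ?_
    rw [Multiset.sum_replicate, ← natCast_zsmul, Int.toNat_of_nonneg (Int.emod_nonneg _ hn0)]
    conv_rhs => rw [← Int.emod_add_mul_ediv (x s) n]
    rw [add_smul, mul_comm, mul_smul, natCast_zsmul, hexp, smul_zero, add_zero]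
  refine ⟨B, ?_, fun a => ?_⟩
  · obtain ⟨z, hz, ez⟩ := exists_factorization (S : Set G) _ B le_rfl
      ⟨fun a ha => by simpa using hmemS a ha, hsum⟩
    refine ⟨z, fun A hA => ⟨hz A hA, ?_⟩, ez⟩
    by_contra hc
    apply hhB
    obtain ⟨z', hz'⟩ := Multiset.exists_cons_of_mem hA
    rw [← ez, hz']
    simp [H3 A (hz A hA) hc h hh]
  · rw [hcount, Int.toNat_of_nonneg (Int.emod_nonneg _ hn0)]
    exact ⟨-(x a / n), by have := Int.emod_add_mul_ediv (x a) n; linarith⟩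

/-- If `|S|` exceeds the rank by at least two, all relations lie in the good lattice. -/
lemma all_mem [Finite G] [DecidableEq G] (S : Finset G) (n : ℕ) (hn : 1 ≤ n)
    (hexp : ∀ g : G, n • g = 0)
    (H3 : ∀ U, IsAtomSeq (S : Set G) U → crossNumber U ≠ 1 → ∀ s ∈ S, s ∈ U)
    (hS : ∀ p : ℕ, p.Prime → pRank G p + 2 ≤ S.card)
    (x : G → ℤ) (hx : ∀ g, g ∉ S → x g = 0) (hrel : ∑ s ∈ S, x s • s = 0) :
    x ∈ goodLattice (S : Set G) n hn := by
  have hcard := hS 2 Nat.prime_two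
  obtain ⟨g, hg⟩ : S.Nonempty := Finset.card_pos.1 (by omega)
  let I : Ideal ℤ :=
    { carrier := {m | m • x ∈ goodLattice (S : Set G) n hn}
      zero_mem' := by
        change (0 : ℤ) • x ∈ goodLattice (S : Set G) n hn
        rw [zero_smul]; exact AddSubgroup.zero_mem _
      add_mem' := by
        intro a b ha hb
        change (a + b) • x ∈ goodLattice (S : Set G) n hn
        rw [add_smul]; exact AddSubgroup.add_mem _ ha hb
      smul_mem' := by
        intro c a ha
        change (c * a) • x ∈ goodLattice (S : Set G) n hn
        rw [mul_smul]; exact AddSubgroup.zsmul_mem _ ha c }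
  have hI : ∀ p : ℕ, p.Prime → ∃ m ∈ I, ¬ (p : ℤ) ∣ m := by
    intro p hp
    obtain ⟨z, hz, hzrel, h, hh, hdvd⟩ := exists_relation (S.erase g) p hp (by
      rw [Finset.card_erase_of_mem hg]
      have := hS p hp
      omega)
    have hzg : z g = 0 := hz g (by simp)
    have hzS : ∀ a, a ∉ S → z a = 0 := fun a ha => hz a (by simp [ha])
    have hzrel' : ∑ s ∈ S, z s • s = 0 := by
      rw [← Finset.add_sum_erase S _ hg, hzrel, hzg]
      simp
    refine ⟨z h, ?_, hdvd⟩
    have hz1 := relation_mem S n hn hexp H3 z hzS hzrel' g hg hzg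
    have hz2 := relation_mem S n hn hexp H3 (z h • x - x h • z)
      (fun a ha => by simp [hx a ha, hzS a ha])
      (by
        have : ∑ s ∈ S, (z h • x - x h • z) s • s
            = z h • ∑ s ∈ S, x s • s - x h • ∑ s ∈ S, z s • s := by
          rw [Finset.smul_sum, Finset.smul_sum, ← Finset.sum_sub_distrib]
          refine Finset.sum_congr rfl fun s _ => ?_
          simp only [Pi.sub_apply, Pi.smul_apply, sub_smul, smul_assoc]
        rw [this, hrel, hzrel']
        simp)
      h (Finset.mem_of_mem_erase hh) (by simp [mul_comm])
    have := AddSubgroup.add_mem _ hz2 (AddSubgroup.zsmul_mem _ hz1 (x h))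
    rw [sub_add_cancel] at this
    exact this
  have h1 : (1 : ℤ) ∈ I := by
    set a := Submodule.IsPrincipal.generator I with ha
    have hgen : ∀ m, m ∈ I ↔ a ∣ m := fun m => Submodule.IsPrincipal.mem_iff_generator_dvd I
    by_cases h1 : a.natAbs = 1
    · rw [hgen]
      exact (Int.isUnit_iff_natAbs_eq.2 h1).dvd
    · obtain ⟨p, hp, hpa⟩ := Nat.exists_prime_and_dvd h1
      obtain ⟨m, hm, hpm⟩ := hI p hp
      exact absurd ((Int.natCast_dvd.2 hpa).trans ((hgen m).1 hm)) hpm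
  have h2 : (1 : ℤ) • x ∈ goodLattice (S : Set G) n hn := h1
  rwa [one_smul] at h2

lemma exists_blocks (F : Finset G) (k : G → ℕ) (f : G → Multiset G) :
    ∃ bl : Multiset G, (∀ s ∈ bl, s ∈ F) ∧ (bl.map f).sum = ∑ s ∈ F, k s • f s := by
  classical
  induction F using Finset.induction_on with
  | empty => exact ⟨0, by simp, by simp⟩
  | insert a F ha ih =>
    obtain ⟨bl, h1, h2⟩ := ih
    refine ⟨Multiset.replicate (k a) a + bl, fun s hs => ?_, ?_⟩
    · rcases Multiset.mem_add.1 hs with h | h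
      · simp [Multiset.eq_of_mem_replicate h]
      · simp [h1 s h]
    · rw [Finset.sum_insert ha, Multiset.map_add, Multiset.sum_add, h2]
      simp

/-- The core of the argument in the case of large `S`. -/
lemma core [Finite G] [DecidableEq G] (S : Finset G) (n : ℕ) (hn : 5 ≤ n)
    (hexp : ∀ g : G, n • g = 0)
    (H1 : ∀ U, IsAtomSeq (S : Set G) U → 1 ≤ crossNumber U)
    (H3 : ∀ U, IsAtomSeq (S : Set G) U → crossNumber U ≠ 1 → ∀ s ∈ S, s ∈ U)
    (hS : ∀ p : ℕ, p.Prime → pRank G p + 2 ≤ S.card)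
    (W : Multiset G) (hW : IsAtomSeq (S : Set G) W) (hk : 1 < crossNumber W) :
    ∃ B : Multiset G, IsZeroSumSeq (S : Set G) B ∧ B ≠ 0 ∧ ∃ a ∈ LengthSet (S : Set G) B,
      ∃ b ∈ LengthSet (S : Set G) B, a < b ∧ b - a ≤ n - 4 := by
  have hWS : ∀ a, a ∉ S → W.count a = 0 := fun a ha =>
    Multiset.count_eq_zero_of_notMem fun h => ha (by simpa using hW.1.1 a h)
  have hmem := all_mem S n (by omega) hexp H3 hS (fun a => (W.count a : ℤ))
    (fun a ha => by simp [hWS a ha]) (by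
      have h1 := hW.1.2
      rw [Finset.sum_multiset_count_of_subset W S
        (fun a ha => by simpa using hW.1.1 a (by simpa using ha))] at h1
      simpa using h1)
  obtain ⟨B, hB, hdvd⟩ := hmem
  choose m hm using hdvd
  have hBS : ∀ a, a ∉ S → B.count a = 0 := fun a ha =>
    Multiset.count_eq_zero_of_notMem fun h => ha (by simpa using hB.isZeroSumSeq.1 a h)
  have hdiv : ∀ a : G, n / addOrderOf a * addOrderOf a = n := fun a =>
    Nat.div_mul_cancel (addOrderOf_dvd_of_nsmul_eq_zero (hexp a))
  let f : G → Multiset G := fun s => Multiset.replicate (addOrderOf s) s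
  have hfgood : ∀ s ∈ S, GoodSeq (S : Set G) (f s) := fun s hs =>
    ⟨{f s}, by
      intro A hA
      rw [Multiset.mem_singleton] at hA
      subst hA
      exact ⟨isAtomSeq_replicate (by simpa using hs), crossNumber_replicate s⟩, by simp⟩
  have hsumgood : ∀ (k : G → ℕ) (F : Finset G), F ⊆ S →
      GoodSeq (S : Set G) (∑ s ∈ F, k s • f s) := by
    intro k F hF
    induction F using Finset.induction_on with
    | empty => simpa using goodSeq_zero _
    | insert a F ha ih =>
      rw [Finset.sum_insert ha]
      exact goodSeq_add (goodSeq_nsmul (hfgood a (hF (by simp))) _)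
        (ih fun s hs => hF (by simp [hs]))
  have hcnt : ∀ (j : G → ℕ) (a : G),
      (∑ s ∈ S, (n / addOrderOf s * j s) • f s).count a = if a ∈ S then n * j a else 0 := by
    intro j a
    rw [Multiset.count_sum']
    simp only [f, Multiset.count_nsmul, Multiset.count_replicate]
    by_cases ha : a ∈ S
    · rw [Finset.sum_eq_single_of_mem a ha]
      · simp only [ha, if_true]
        calc _ = (n / addOrderOf a * addOrderOf a) * j a := by ring
          _ = _ := by rw [hdiv]
      · intro b _ hb
        simp [hb]
    · rw [if_neg ha]
      refine Finset.sum_eq_zero fun b hb => ?_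
      have : b ≠ a := fun h => ha (h ▸ hb)
      simp [this]
  obtain ⟨bl, hbl, ebl⟩ := exists_blocks S (fun s => n / addOrderOf s * (m s).toNat) f
  have heq : W + (bl.map f).sum
      = B + ∑ s ∈ S, (n / addOrderOf s * (-m s).toNat) • f s := by
    rw [ebl]
    ext a
    rw [Multiset.count_add, Multiset.count_add, hcnt (fun s => (m s).toNat),
      hcnt (fun s => (-m s).toNat)]
    by_cases ha : a ∈ S
    · simp only [ha, if_true]
      have h1 := hm a
      have h2 : ((m a).toNat : ℤ) - ((-m a).toNat : ℤ) = m a := Int.toNat_sub_toNat_neg _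
      zify
      have h3 : (n : ℤ) * ((m a).toNat : ℤ) - n * ((-m a).toNat : ℤ) = n * m a := by
        rw [← mul_sub, h2]
      linarith
    · simp [ha, hWS a ha, hBS a ha]
  have hgood : GoodSeq (S : Set G) (W + (bl.map f).sum) := by
    rw [heq]
    exact goodSeq_add hB (hsumgood _ S (Finset.Subset.refl S))
  have hWbad : ¬ GoodSeq (S : Set G) W := by
    rintro ⟨z, hz, ez⟩
    have hz0 : z ≠ 0 := by
      rintro rfl
      exact hW.2.1 (by simpa using ez.symm)
    obtain ⟨A, hA⟩ := Multiset.exists_mem_of_ne_zero hz0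
    obtain ⟨z', rfl⟩ := Multiset.exists_cons_of_mem hA
    rw [Multiset.sum_cons] at ez
    by_cases h0 : z'.sum = 0
    · rw [h0, add_zero] at ez
      rw [← ez, (hz A hA).2] at hk
      exact lt_irrefl _ hk
    · exact hW.2.2 A z'.sum (hz A hA).1.1
        (isZeroSumSeq_sum _ fun C hC => (hz C (by simp [hC])).1.1) (hz A hA).1.2.1 h0 ez.symm
  obtain ⟨h, hh, Y, hY, hYg⟩ := exists_step (S : Set G) bl W
    (fun s hs => by simpa using hbl s hs) hWbad hgood
  exact bound_exp (S : Set G) n hn H1 (fun U hU h1 s hs => H3 U hU h1 s (by simpa using hs)) h hh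
    (Nat.le_of_dvd (by omega) (addOrderOf_dvd_of_nsmul_eq_zero (hexp h))) Y hY hYg

lemma pRank_le_rankG [Finite G] (p : ℕ) (hp : p.Prime) : pRank G p ≤ rankG G := by
  refine le_csSup ⟨Nat.card G, ?_⟩ ⟨p, hp, rfl⟩
  rintro r ⟨q, _, rfl⟩
  exact (Nat.log_le_self _ _).trans
    (Nat.card_le_card_of_injective Subtype.val Subtype.val_injective)

end Helpers

/-- If `exp(G) = n ≥ 5` and `r(G) ≤ n − 3`, then every non-half-factorial
LCN-set `G₀ ⊆ G` satisfies `min Δ(G₀) ≤ n − 4`. -/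
theorem stmt_12 {G : Type*} [AddCommGroup G] [Fintype G]
    (h5 : 5 ≤ AddMonoid.exponent G) (hr : rankG G ≤ AddMonoid.exponent G - 3) :
    ∀ G₀ : Set G, (DeltaSet G₀).Nonempty → IsLCNSet G₀ →
      sInf (DeltaSet G₀) ≤ AddMonoid.exponent G - 4 := by
  classical
  intro G₀ hne hL
  set n := AddMonoid.exponent G with hnd
  have hexp : ∀ g : G, n • g = 0 := AddMonoid.exponent_nsmul_eq_zero
  have hbad : ∃ t : ℕ, ∃ W : Multiset G, IsAtomSeq G₀ W ∧ crossNumber W ≠ 1 ∧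
      W.toFinset.card = t := by
    by_contra hcon
    push Not at hcon
    have hone : ∀ W, IsAtomSeq G₀ W → crossNumber W = 1 := by
      intro W hW
      by_contra hc
      exact hcon _ W hW hc rfl
    obtain ⟨d, B, _, _, x, ⟨l1, c1, h1, e1⟩, y, ⟨l2, c2, h2, e2⟩, hxy, _, _⟩ := hne
    have k1 := sum_eq_of_eq l1 fun A hA => hone A (h1 A hA)
    have k2 := sum_eq_of_eq l2 fun A hA => hone A (h2 A hA)
    rw [← crossNumber_sum, e1, c1] at k1
    rw [← crossNumber_sum, e2, c2] at k2
    have : x = y := by exact_mod_cast k1.symm.trans k2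
    omega
  obtain ⟨W, hW, hW1, hWt⟩ := Nat.find_spec hbad
  have hsub : ((W.toFinset : Finset G) : Set G) ⊆ G₀ := fun a ha => hW.1.1 a (by simpa using ha)
  set S := W.toFinset with hS
  have hWS : IsAtomSeq (S : Set G) W := isAtomSeq_restrict hW hsub fun a ha => by simpa [hS] using ha
  have H1 : ∀ U, IsAtomSeq (S : Set G) U → 1 ≤ crossNumber U := fun U hU =>
    hL U (isAtomSeq_mono hsub hU)
  have hk : 1 < crossNumber W := lt_of_le_of_ne (hL W hW) (Ne.symm hW1)
  have H3 : ∀ U, IsAtomSeq (S : Set G) U → crossNumber U ≠ 1 → ∀ s ∈ S, s ∈ U := by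
    intro U hU hU1 s hs
    have hle : U.toFinset ⊆ S := fun a ha => by simpa using hU.1.1 a (by simpa using ha)
    have hge : S.card ≤ U.toFinset.card := by
      rw [hWt]
      exact Nat.find_min' hbad ⟨U, isAtomSeq_mono hsub hU, hU1, rfl⟩
    have := Finset.eq_of_subset_of_card_le hle hge
    rw [← this] at hs
    simpa using hs
  have hfinal : ∃ B : Multiset G, IsZeroSumSeq (S : Set G) B ∧ B ≠ 0 ∧
      ∃ a ∈ LengthSet (S : Set G) B, ∃ b ∈ LengthSet (S : Set G) B, a < b ∧ b - a ≤ n - 4 := by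
    by_cases hc : rankG G + 2 ≤ S.card
    · exact core S n h5 hexp H1 H3
        (fun p hp => by have := pRank_le_rankG (G := G) p hp; omega) W hWS hk
    · obtain ⟨B, hB, hB0, a, ha, b, hb, hab, hd⟩ :=
        bound_card S H1 W hWS hk fun s hs => by simpa [hS] using hs
      exact ⟨B, hB, hB0, a, ha, b, hb, hab, by omega⟩
  obtain ⟨B, hB, hB0, a, ⟨l1, c1, h1, e1⟩, b, ⟨l2, c2, h2, e2⟩, hab, hd⟩ := hfinal
  refine le_trans (exists_delta_le (S := G₀) (B := B) ⟨fun x hx => hsub (hB.1 x hx), hB.2⟩ hB0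
    (a := a) (b := b) ?_ ?_ hab) hd
  · exact ⟨l1, c1, fun A hA => isAtomSeq_mono hsub (h1 A hA), e1⟩
  · exact ⟨l2, c2, fun A hA => isAtomSeq_mono hsub (h2 A hA), e2⟩
end
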